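/- arXiv:2407.06364 — 2 statements merged into one kernel-verified Lean document; each statement's English description precedes it below -/
import Mathlib

section
/- Let R be a right Noetherian ring and M a right R-module, and let ℰ be the class of all right R-modules of finite injective dimension. If Ext^i_R(L, M) = 0 for every L ∈ ℰ and all i > 0, then there exists an ℰ-precover f : E → M in which E is an injective right R-module. -/
open Function MulOpposite

universe u

noncomputable section

/-! ## Chain conditions -/

/-- A ring is right coherent if every finitely generated right ideal is finitely presented. -/
def IsRightCoherentRing (R : Type u) [Ring R] : Prop :=
  ∀ I : Submodule Rᵐᵒᵖ R, I.FG → Module.FinitePresentation Rᵐᵒᵖ I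

/-- A ring is left coherent if every finitely generated left ideal is finitely presented. -/
def IsLeftCoherentRing (S : Type u) [Ring S] : Prop :=
  ∀ I : Submodule S S, I.FG → Module.FinitePresentation S I

/-- A ring is right Noetherian if every right ideal is finitely generated. -/
def IsRightNoetherianRing (R : Type u) [Ring R] : Prop :=
  ∀ I : Submodule Rᵐᵒᵖ R, I.FG

/-! ## The tensor product `N ⊗_S T` of a right `S`-module `N` with a left `S`-module `T` -/

section MTensor

variable (S : Type u) [Ring S]
variable (N : Type u) [AddCommGroup N] [Module Sᵐᵒᵖ N]
variable (T : Type u) [AddCommGroup T] [Module S T]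

/-- The subgroup of balancing relations defining `N ⊗_S T` as a quotient of `T ⊗_ℤ N`. -/
def mtRel : AddSubgroup (TensorProduct ℤ T N) :=
  AddSubgroup.closure
    {x | ∃ (s : S) (t : T) (n : N), x = (s • t) ⊗ₜ[ℤ] n - t ⊗ₜ[ℤ] (op s • n)}

/-- `MTensor S N T` is the tensor product `N ⊗_S T` of a right `S`-module `N` with a left
`S`-module `T`, realized as a quotient of `T ⊗_ℤ N`. -/
def MTensor : Type u := TensorProduct ℤ T N ⧸ mtRel S N T

instance : AddCommGroup (MTensor S N T) :=
  inferInstanceAs (AddCommGroup (TensorProduct ℤ T N ⧸ mtRel S N T))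

variable {S N T}

/-- `MTensor.mk n t` is the element `n ⊗ t` of `N ⊗_S T`. -/
def MTensor.mk (n : N) (t : T) : MTensor S N T := QuotientAddGroup.mk (t ⊗ₜ[ℤ] n)

section Map

variable {N' : Type u} [AddCommGroup N'] [Module Sᵐᵒᵖ N']

/-- Functoriality of `N ⊗_S T` in the right `S`-module variable `N`. -/
def MTensor.map (g : N →ₗ[Sᵐᵒᵖ] N') : MTensor S N T →+ MTensor S N' T :=
  QuotientAddGroup.map _ _
    (LinearMap.lTensor T g.toAddMonoidHom.toIntLinearMap).toAddMonoidHom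
    (by
      refine (AddSubgroup.closure_le _).2 ?_
      rintro x ⟨s, t, n, rfl⟩
      simp only [SetLike.mem_coe, AddSubgroup.mem_comap, LinearMap.toAddMonoidHom_coe,
        map_sub, LinearMap.lTensor_tmul, AddMonoidHom.coe_toIntLinearMap,
        LinearMap.toAddMonoidHom_coe, map_smul]
      exact AddSubgroup.subset_closure ⟨s, t, g n, rfl⟩)

end Map

section LMap

variable {T' : Type u} [AddCommGroup T'] [Module S T']

/-- Functoriality of `N ⊗_S T` in the left `S`-module variable `T`. -/
def MTensor.lmap (h : T →ₗ[S] T') : MTensor S N T →+ MTensor S N T' :=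
  QuotientAddGroup.map _ _
    (LinearMap.rTensor N h.toAddMonoidHom.toIntLinearMap).toAddMonoidHom
    (by
      refine (AddSubgroup.closure_le _).2 ?_
      rintro x ⟨s, t, n, rfl⟩
      simp only [SetLike.mem_coe, AddSubgroup.mem_comap, LinearMap.toAddMonoidHom_coe,
        map_sub, LinearMap.rTensor_tmul, AddMonoidHom.coe_toIntLinearMap, map_smul]
      exact AddSubgroup.subset_closure ⟨s, h t, n, rfl⟩)

end LMap

section Bimod

variable (R : Type u) [Ring R] [Module Rᵐᵒᵖ T] [SMulCommClass S Rᵐᵒᵖ T]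

instance MTensor.instSMul : SMul Rᵐᵒᵖ (MTensor S N T) :=
  ⟨fun ρ =>
    QuotientAddGroup.map _ _ (DistribMulAction.toAddMonoidHom (TensorProduct ℤ T N) ρ)
      (by
        refine (AddSubgroup.closure_le _).2 ?_
        rintro x ⟨s, t, n, rfl⟩
        simp only [SetLike.mem_coe, AddSubgroup.mem_comap,
          DistribMulAction.toAddMonoidHom_apply, smul_sub, TensorProduct.smul_tmul']
        exact AddSubgroup.subset_closure ⟨s, ρ • t, n, by rw [smul_comm s ρ t]⟩)⟩

instance MTensor.instModule : Module Rᵐᵒᵖ (MTensor S N T) :=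
  Function.Surjective.module Rᵐᵒᵖ (QuotientAddGroup.mk' (mtRel S N T))
    (QuotientAddGroup.mk'_surjective _) (fun _ _ => rfl)

theorem MTensor.smul_mk (ρ : Rᵐᵒᵖ) (n : N) (t : T) :
    ρ • (MTensor.mk n t : MTensor S N T) = MTensor.mk n (ρ • t) := by
  show QuotientAddGroup.mk (ρ • (t ⊗ₜ[ℤ] n)) = QuotientAddGroup.mk ((ρ • t) ⊗ₜ[ℤ] n)
  rw [TensorProduct.smul_tmul']

theorem MTensor.mk_add_right (n : N) (t t' : T) :
    (MTensor.mk n (t + t') : MTensor S N T) = MTensor.mk n t + MTensor.mk n t' := by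
  show QuotientAddGroup.mk _ = _
  rw [TensorProduct.add_tmul]
  rfl

/-- The natural map `θ_N : N → Hom_R(T, N ⊗_S T)`, `n ↦ (t ↦ n ⊗ t)`. -/
def MTensor.theta (n : N) : T →ₗ[Rᵐᵒᵖ] MTensor S N T where
  toFun t := MTensor.mk n t
  map_add' t t' := MTensor.mk_add_right n t t'
  map_smul' ρ t := (MTensor.smul_mk R ρ n t).symm

variable (S T N) in
/-- The natural map `θ_N : N → Hom_R(T, N ⊗_S T)` as a function. -/
def MTensor.thetaFun : N → (T →ₗ[Rᵐᵒᵖ] MTensor S N T) := fun n => MTensor.theta R n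

end Bimod

end MTensor

/-! ## The right `S`-module structure on `Hom_A(T, M)` induced by a left `S`-action on `T` -/

section HomModule

variable {B A : Type u} [Ring B] [Ring A]
variable {T : Type u} [AddCommGroup T] [Module A T] [Module B T] [SMulCommClass B A T]
variable {M : Type u} [AddCommGroup M] [Module A M]

instance homDomSMul : SMul Bᵐᵒᵖ (T →ₗ[A] M) :=
  ⟨fun b f =>
    { toFun := fun t => f (b.unop • t)
      map_add' := fun t t' => by
        show f (b.unop • (t + t')) = f (b.unop • t) + f (b.unop • t')
        rw [smul_add, map_add]
      map_smul' := fun a t => by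
        show f (b.unop • a • t) = a • f (b.unop • t)
        rw [smul_comm b.unop a t, map_smul] }⟩

@[simp] theorem homDomSMul_apply (b : Bᵐᵒᵖ) (f : T →ₗ[A] M) (t : T) :
    (b • f) t = f (b.unop • t) := rfl

instance homDomModule : Module Bᵐᵒᵖ (T →ₗ[A] M) where
  one_smul f := LinearMap.ext fun t => by simp
  mul_smul b b' f := LinearMap.ext fun t => by simp [mul_smul]
  smul_zero b := LinearMap.ext fun t => rfl
  smul_add b f g := LinearMap.ext fun t => rfl
  add_smul b b' f := LinearMap.ext fun t => by simp [add_smul]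
  zero_smul f := LinearMap.ext fun t => by simp

end HomModule

/-! ## The evaluation map `ν_M : Hom_R(T, M) ⊗_S T → M` -/

section Nu

variable (S R : Type u) [Ring S] [Ring R]
variable (T : Type u) [AddCommGroup T] [Module S T] [Module Rᵐᵒᵖ T] [SMulCommClass S Rᵐᵒᵖ T]
variable (M : Type u) [AddCommGroup M] [Module Rᵐᵒᵖ M]

/-- The evaluation map `ν_M : Hom_R(T, M) ⊗_S T → M`, `f ⊗ t ↦ f t`. -/
def MTensor.nuFun : MTensor S (T →ₗ[Rᵐᵒᵖ] M) T →+ M :=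
  QuotientAddGroup.lift _
    (TensorProduct.liftAddHom
      { toFun := fun t =>
          { toFun := fun f : T →ₗ[Rᵐᵒᵖ] M => f t
            map_zero' := rfl
            map_add' := fun f g => rfl }
        map_zero' := AddMonoidHom.ext fun f => f.map_zero
        map_add' := fun t t' => AddMonoidHom.ext fun f => f.map_add t t' }
      (fun z t f => by
        show f (z • t) = (z • f) t
        rw [map_zsmul, LinearMap.smul_apply]))
    (by
      refine (AddSubgroup.closure_le _).2 ?_
      rintro x ⟨s, t, f, rfl⟩
      simp only [SetLike.mem_coe, AddMonoidHom.mem_ker, map_sub,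
        TensorProduct.liftAddHom_tmul, AddMonoidHom.coe_mk, ZeroHom.coe_mk]
      show f (s • t) - (op s • f) t = 0
      rw [homDomSMul_apply]
      simp)

end Nu


/-! ## Resolutions and derived-functor vanishing -/

/-- The data of a nonnegatively graded chain complex `⋯ → P 1 → P 0 → X` of `A`-modules. -/
structure ResolutionData (A : Type u) [Ring A] (X : Type u) [AddCommGroup X] [Module A X] :
    Type (u + 1) where
  P : ℕ → Type u
  [instAdd : ∀ n, AddCommGroup (P n)]
  [instMod : ∀ n, Module A (P n)]
  d : ∀ n, P (n + 1) →ₗ[A] P n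
  ε : P 0 →ₗ[A] X

attribute [instance] ResolutionData.instAdd ResolutionData.instMod

/-- The property of being a projective resolution. -/
structure ResolutionData.IsProjResolution {A : Type u} [Ring A] {X : Type u} [AddCommGroup X]
    [Module A X] (Q : ResolutionData A X) : Prop where
  proj : ∀ n, Module.Projective A (Q.P n)
  surj : Function.Surjective Q.ε
  exact0 : Function.Exact (Q.d 0) Q.ε
  exactSucc : ∀ n, Function.Exact (Q.d (n + 1)) (Q.d n)

/-- `X` has a resolution by finitely generated projective `A`-modules. -/
def HasFGProjResolution (A : Type u) [Ring A] (X : Type u) [AddCommGroup X] [Module A X] : Prop :=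
  ∃ Q : ResolutionData A X, Q.IsProjResolution ∧ ∀ n, Module.Finite A (Q.P n)

/-- `Ext^i_A(X, Y) = 0` for all `i ≥ 1`: some (equivalently, any) projective resolution of `X`
has `Hom_A(-, Y)`-complex exact at all positive degrees. -/
def ExtVanishAll (A : Type u) [Ring A] (X Y : Type u) [AddCommGroup X] [Module A X]
    [AddCommGroup Y] [Module A Y] : Prop :=
  ∃ Q : ResolutionData A X, Q.IsProjResolution ∧
    ∀ j : ℕ, Function.Exact
      (fun f : Q.P j →ₗ[A] Y => f.comp (Q.d j))
      (fun f : Q.P (j + 1) →ₗ[A] Y => f.comp (Q.d (j + 1)))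

/-- `Ext^1_A(X, Y) = 0`: every short exact sequence `0 → Y → E → X → 0` splits. -/
def Ext1Vanishes (A : Type u) [Ring A] (X Y : Type u) [AddCommGroup X] [Module A X]
    [AddCommGroup Y] [Module A Y] : Prop :=
  ∀ (E : Type u) [AddCommGroup E] [Module A E] (i : Y →ₗ[A] E) (p : E →ₗ[A] X),
    Function.Injective i → Function.Surjective p → Function.Exact i p →
      ∃ s : X →ₗ[A] E, p.comp s = LinearMap.id

/-- `Tor^S_i(N, T) = 0` for all `i ≥ 1`: some (equivalently, any) projective resolution of the
right `S`-module `N` stays exact in positive degrees after applying `- ⊗_S T`. -/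
def TorVanishAll (S : Type u) [Ring S] (N : Type u) [AddCommGroup N] [Module Sᵐᵒᵖ N]
    (T : Type u) [AddCommGroup T] [Module S T] : Prop :=
  ∃ Q : ResolutionData Sᵐᵒᵖ N, Q.IsProjResolution ∧
    ∀ j : ℕ, Function.Exact
      (⇑(MTensor.map (T := T) (Q.d (j + 1))))
      (⇑(MTensor.map (T := T) (Q.d j)))

/-! ## Homological dimensions -/

/-- A surjection onto `M` from some module. -/
structure EpiOnto (A : Type u) [Ring A] (M : ModuleCat.{u} A) : Type (u + 1) where
  P : ModuleCat.{u} A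
  f : P →ₗ[A] M
  surj : Function.Surjective f

/-- An injection of `M` into some module. -/
structure MonoInto (A : Type u) [Ring A] (M : ModuleCat.{u} A) : Type (u + 1) where
  E : ModuleCat.{u} A
  f : M →ₗ[A] E
  inj : Function.Injective f

/-- `HasClassResolution A 𝒞 n M` says that there is an exact sequence
`0 → C_n → ⋯ → C_0 → M → 0` with all `C_i` in the class `𝒞`. -/
def HasClassResolution (A : Type u) [Ring A] (C : ModuleCat.{u} A → Prop) :
    ℕ → ModuleCat.{u} A → Prop
  | 0, M => C M
  | n + 1, M => ∃ e : EpiOnto A M, C e.P ∧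
      HasClassResolution A C n (ModuleCat.of A (LinearMap.ker e.f))

/-- `HasClassCoresolution A 𝒞 n M` says that there is an exact sequence
`0 → M → C^0 → ⋯ → C^n → 0` with all `C^i` in the class `𝒞`. -/
def HasClassCoresolution (A : Type u) [Ring A] (C : ModuleCat.{u} A → Prop) :
    ℕ → ModuleCat.{u} A → Prop
  | 0, M => C M
  | n + 1, M => ∃ m : MonoInto A M, C m.E ∧
      HasClassCoresolution A C n (ModuleCat.of A ((↥m.E) ⧸ LinearMap.range m.f))

/-- The projective dimension of `M` is at most `n`. -/
def ProjDimLE (A : Type u) [Ring A] (M : Type u) [AddCommGroup M] [Module A M] (n : ℕ) : Prop :=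
  HasClassResolution A (fun P => Module.Projective A P) n (ModuleCat.of A M)

/-- The injective dimension of `M` is at most `n`. -/
def InjDimLE (A : Type u) [Ring A] (M : Type u) [AddCommGroup M] [Module A M] (n : ℕ) : Prop :=
  HasClassCoresolution A (fun E => Module.Injective A E) n (ModuleCat.of A M)

/-- A right `S`-module `N` is flat if `N ⊗_S -` preserves injections of left `S`-modules. -/
def IsFlatRightModule (S : Type u) [Ring S] (N : Type u) [AddCommGroup N] [Module Sᵐᵒᵖ N] :
    Prop :=
  ∀ (X Y : Type u) [AddCommGroup X] [Module S X] [AddCommGroup Y] [Module S Y]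
    (g : X →ₗ[S] Y), Function.Injective g →
      Function.Injective (MTensor.lmap (N := N) g)

/-- The flat dimension of the right `S`-module `N` is at most `n`. -/
def FlatDimLE (S : Type u) [Ring S] (N : Type u) [AddCommGroup N] [Module Sᵐᵒᵖ N] (n : ℕ) :
    Prop :=
  HasClassResolution Sᵐᵒᵖ (fun P => IsFlatRightModule S P) n (ModuleCat.of Sᵐᵒᵖ N)

/-! ## Gorenstein homological algebra -/

/-- The data of a `ℤ`-indexed complex of `A`-modules. -/
structure ZComplex (A : Type u) [Ring A] : Type (u + 1) where
  P : ℤ → Type u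
  [instAdd : ∀ i, AddCommGroup (P i)]
  [instMod : ∀ i, Module A (P i)]
  d : ∀ i, P i →ₗ[A] P (i + 1)

attribute [instance] ZComplex.instAdd ZComplex.instMod

/-- Exactness of a `ℤ`-indexed complex. -/
def ZComplex.IsExact {A : Type u} [Ring A] (C : ZComplex A) : Prop :=
  ∀ i, Function.Exact (C.d i) (C.d (i + 1))

/-- A module is Gorenstein projective if it is a kernel of a totally acyclic complex of
projective modules. -/
def IsGorensteinProjective (A : Type u) [Ring A] (N : Type u) [AddCommGroup N] [Module A N] :
    Prop :=
  ∃ C : ZComplex A, (∀ i, Module.Projective A (C.P i)) ∧ C.IsExact ∧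
    (∀ (Q : Type u) [AddCommGroup Q] [Module A Q], Module.Projective A Q →
      ∀ i, Function.Exact
        (fun f : C.P (i + 1 + 1) →ₗ[A] Q => f.comp (C.d (i + 1)))
        (fun f : C.P (i + 1) →ₗ[A] Q => f.comp (C.d i))) ∧
    Nonempty (N ≃ₗ[A] LinearMap.ker (C.d 0))

/-- A module is Gorenstein injective if it is a kernel of a totally acyclic complex of
injective modules. -/
def IsGorensteinInjective (A : Type u) [Ring A] (M : Type u) [AddCommGroup M] [Module A M] :
    Prop :=
  ∃ C : ZComplex A, (∀ i, Module.Injective A (C.P i)) ∧ C.IsExact ∧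
    (∀ (I : Type u) [AddCommGroup I] [Module A I], Module.Injective A I →
      ∀ i, Function.Exact
        (fun f : I →ₗ[A] C.P i => (C.d i).comp f)
        (fun f : I →ₗ[A] C.P (i + 1) => (C.d (i + 1)).comp f)) ∧
    Nonempty (M ≃ₗ[A] LinearMap.ker (C.d 0))

/-- A right `S`-module is Gorenstein flat if it is a kernel of a complex of flat right
`S`-modules which stays exact after tensoring with any injective left `S`-module. -/
def IsGorensteinFlat (S : Type u) [Ring S] (N : Type u) [AddCommGroup N] [Module Sᵐᵒᵖ N] :
    Prop :=
  ∃ C : ZComplex Sᵐᵒᵖ, (∀ i, IsFlatRightModule S (C.P i)) ∧ C.IsExact ∧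
    (∀ (I : Type u) [AddCommGroup I] [Module S I], Module.Injective S I →
      ∀ i, Function.Exact
        (⇑(MTensor.map (T := I) (C.d i)))
        (⇑(MTensor.map (T := I) (C.d (i + 1))))) ∧
    Nonempty (N ≃ₗ[Sᵐᵒᵖ] LinearMap.ker (C.d 0))

/-- The Gorenstein projective dimension of `N` is at most `n`. -/
def GpdLE (A : Type u) [Ring A] (N : Type u) [AddCommGroup N] [Module A N] (n : ℕ) : Prop :=
  HasClassResolution A (fun P => IsGorensteinProjective A P) n (ModuleCat.of A N)

/-- The Gorenstein flat dimension of the right `S`-module `N` is at most `n`. -/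
def GfdLE (S : Type u) [Ring S] (N : Type u) [AddCommGroup N] [Module Sᵐᵒᵖ N] (n : ℕ) : Prop :=
  HasClassResolution Sᵐᵒᵖ (fun P => IsGorensteinFlat S P) n (ModuleCat.of Sᵐᵒᵖ N)

/-- The Gorenstein injective dimension of `M` is at most `n`. -/
def GidLE (A : Type u) [Ring A] (M : Type u) [AddCommGroup M] [Module A M] (n : ℕ) : Prop :=
  HasClassCoresolution A (fun E => IsGorensteinInjective A E) n (ModuleCat.of A M)

/-! ## Module classes `Prod(C)`, `Add(C)`, `add(C)` and (co)generators -/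

/-- `M` is a retract (equivalently, a direct summand up to isomorphism) of `P`. -/
def IsRetractOf (A : Type u) [Ring A] (M P : Type u) [AddCommGroup M] [Module A M]
    [AddCommGroup P] [Module A P] : Prop :=
  ∃ (f : M →ₗ[A] P) (g : P →ₗ[A] M), g.comp f = LinearMap.id

/-- `Prod(C)`: direct summands of direct products of copies of `C`. -/
def InProdClass (A : Type u) [Ring A] (C : Type u) [AddCommGroup C] [Module A C]
    (M : ModuleCat.{u} A) : Prop :=
  ∃ I : Type u, IsRetractOf A M (I → C)

/-- `Add(C)`: direct summands of direct sums of copies of `C`. -/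
def InAddClass (A : Type u) [Ring A] (C : Type u) [AddCommGroup C] [Module A C]
    (M : ModuleCat.{u} A) : Prop :=
  ∃ I : Type u, IsRetractOf A M (I →₀ C)

/-- `add(C)`: direct summands of finite direct sums of copies of `C`. -/
def InFinAddClass (A : Type u) [Ring A] (C : Type u) [AddCommGroup C] [Module A C]
    (M : ModuleCat.{u} A) : Prop :=
  ∃ k : ℕ, IsRetractOf A M (Fin k → C)

/-- `Q` is an injective cogenerator: `Q` is injective and every module embeds into a direct
product of copies of `Q`. -/
def IsInjectiveCogenerator (A : Type u) [Ring A] (Q : Type u) [AddCommGroup Q] [Module A Q] :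
    Prop :=
  Module.Injective A Q ∧
    ∀ (M : Type u) [AddCommGroup M] [Module A M],
      ∃ (I : Type u) (f : M →ₗ[A] (I → Q)), Function.Injective f

/-- `E` is the minimal injective cogenerator: it is an injective cogenerator which is a direct
summand of every injective cogenerator. -/
def IsMinimalInjectiveCogenerator (A : Type u) [Ring A] (E : Type u) [AddCommGroup E]
    [Module A E] : Prop :=
  IsInjectiveCogenerator A E ∧
    ∀ (Q : Type u) [AddCommGroup Q] [Module A Q],
      IsInjectiveCogenerator A Q → IsRetractOf A E Q

/-! ## Bimodules, homotheties, Wakamatsu tilting bimodules -/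

section Bimodules

variable (S R : Type u) [Ring S] [Ring R]
variable (T : Type u) [AddCommGroup T] [Module S T] [Module Rᵐᵒᵖ T] [SMulCommClass S Rᵐᵒᵖ T]

/-- The natural map `S → End(T_R)` given by the left `S`-action. -/
def leftHomothety : S → (T →ₗ[Rᵐᵒᵖ] T) := fun s =>
  { toFun := fun t => s • t
    map_add' := fun t t' => smul_add s t t'
    map_smul' := fun ρ t => smul_comm s ρ t }

/-- The natural map `R → End(_S T)` given by the right `R`-action. -/
def rightHomothety : R → (T →ₗ[S] T) := fun r =>
  { toFun := fun t => op r • t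
    map_add' := fun t t' => smul_add (op r) t t'
    map_smul' := fun s t => (smul_comm s (op r) t).symm }

/-- A Wakamatsu tilting `(S, R)`-bimodule: `T` admits resolutions by finitely generated
projectives on both sides, the natural maps `S → End(T_R)` and `R → End(_S T)` are
isomorphisms, and `Ext^i(T, T) = 0` on both sides for all `i ≥ 1`. -/
structure IsWakamatsuTilting : Prop where
  fgProjResR : HasFGProjResolution Rᵐᵒᵖ T
  fgProjResS : HasFGProjResolution S T
  bijS : Function.Bijective (leftHomothety S R T)
  bijR : Function.Bijective (rightHomothety S R T)
  extR : ExtVanishAll Rᵐᵒᵖ T T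
  extS : ExtVanishAll S T T

/-- An `(S, R)`-bimodule `T` is tensorly faithful if `T ⊗_R M = 0` implies `M = 0` and
`N ⊗_S T = 0` implies `N = 0`. -/
def IsTensorlyFaithful : Prop :=
  (∀ (M : Type u) [AddCommGroup M] [Module R M],
      Subsingleton (MTensor R T M) → Subsingleton M) ∧
  (∀ (N : Type u) [AddCommGroup N] [Module Sᵐᵒᵖ N],
      Subsingleton (MTensor S N T) → Subsingleton N)

/-- Membership in the Auslander class `𝒜_T(S)`. -/
structure InAuslanderClass (N : Type u) [AddCommGroup N] [Module Sᵐᵒᵖ N] : Prop where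
  torVanish : TorVanishAll S N T
  extVanish : ExtVanishAll Rᵐᵒᵖ T (MTensor S N T)
  thetaBij : Function.Bijective (MTensor.thetaFun S N T R)

/-- Membership in the Bass class `ℬ_T(R)`. -/
structure InBassClass (M : Type u) [AddCommGroup M] [Module Rᵐᵒᵖ M] : Prop where
  extVanish : ExtVanishAll Rᵐᵒᵖ T M
  torVanish : TorVanishAll S (T →ₗ[Rᵐᵒᵖ] M) T
  nuBij : Function.Bijective (MTensor.nuFun S R T M)

end Bimodules

/-! ## Cotilting and tilting modules -/

/-- A cotilting right `R`-module (Hügel–Coelho): finite injective dimension,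
`Ext^{i≥1}_R(Cᴵ, C) = 0` for every index set `I`, and there is a finite exact sequence
`0 → C_r → ⋯ → C_0 → Q → 0` with all `C_i ∈ Prod(C)` and `Q` an injective cogenerator. -/
structure IsCotilting (R : Type u) [Ring R] (C : Type u) [AddCommGroup C] [Module Rᵐᵒᵖ C] :
    Prop where
  finInjDim : ∃ n, InjDimLE Rᵐᵒᵖ C n
  extProdVanish : ∀ I : Type u, ExtVanishAll Rᵐᵒᵖ (I → C) C
  coresolution : ∃ (Q : ModuleCat.{u} Rᵐᵒᵖ) (r : ℕ),
    IsInjectiveCogenerator Rᵐᵒᵖ Q ∧ HasClassResolution Rᵐᵒᵖ (InProdClass Rᵐᵒᵖ C) r Q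

/-- An `n`-tilting right `R`-module (Miyashita). -/
structure IsNTilting (R : Type u) [Ring R] (T : Type u) [AddCommGroup T] [Module Rᵐᵒᵖ T]
    (n : ℕ) : Prop where
  fgProjRes : HasFGProjResolution Rᵐᵒᵖ T
  projDim : ProjDimLE Rᵐᵒᵖ T n
  extVanish : ExtVanishAll Rᵐᵒᵖ T T
  coresolution : HasClassCoresolution Rᵐᵒᵖ (InFinAddClass Rᵐᵒᵖ T) n (ModuleCat.of Rᵐᵒᵖ R)

/-- The data of a coresolution `0 → R → P 0 → P 1 → ⋯` of right `R`-modules. -/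
structure WakamatsuCoresolutionData (R : Type u) [Ring R] : Type (u + 1) where
  P : ℕ → Type u
  [instAdd : ∀ n, AddCommGroup (P n)]
  [instMod : ∀ n, Module Rᵐᵒᵖ (P n)]
  f0 : R →ₗ[Rᵐᵒᵖ] P 0
  d : ∀ n, P n →ₗ[Rᵐᵒᵖ] P (n + 1)

attribute [instance] WakamatsuCoresolutionData.instAdd WakamatsuCoresolutionData.instMod

/-- A Wakamatsu tilting right `R`-module: it admits a resolution by finitely generated
projective right `R`-modules, `Ext^{i≥1}_R(T, T) = 0`, and there is an exact sequence
`0 → R → T^0 → T^1 → ⋯` with each `T^i ∈ add(T)` and `Ext^1_R(Coker f, T) = 0` for every map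
`f` in this sequence. -/
def IsWakamatsuTiltingModule (R : Type u) [Ring R] (T : Type u) [AddCommGroup T]
    [Module Rᵐᵒᵖ T] : Prop :=
  HasFGProjResolution Rᵐᵒᵖ T ∧ ExtVanishAll Rᵐᵒᵖ T T ∧
    ∃ W : WakamatsuCoresolutionData R,
      Function.Injective W.f0 ∧ Function.Exact W.f0 (W.d 0) ∧
      (∀ n, Function.Exact (W.d n) (W.d (n + 1))) ∧
      (∀ n, InFinAddClass Rᵐᵒᵖ T (ModuleCat.of Rᵐᵒᵖ (W.P n))) ∧
      Ext1Vanishes Rᵐᵒᵖ ((W.P 0) ⧸ LinearMap.range W.f0) T ∧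
      (∀ n, Ext1Vanishes Rᵐᵒᵖ ((W.P (n + 1)) ⧸ LinearMap.range (W.d n)) T)

namespace Module.Injective

variable {A : Type u} [Ring A]

theorem of_linearEquiv {P Q : Type u} [AddCommGroup P] [Module A P] [AddCommGroup Q] [Module A Q]
    (e : P ≃ₗ[A] Q) (hP : Module.Injective A P) : Module.Injective A Q :=
  Module.Baer.injective (Module.Baer.of_equiv e (Module.Baer.of_injective hP))

/-- Over a Noetherian ring, the directed union of injective submodules is injective. -/
theorem sSup_of_directedOn [IsNoetherianRing A] {I : Type u} [AddCommGroup I] [Module A I]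
    {D : Set (Submodule A I)} (hne : D.Nonempty) (hD : DirectedOn (· ≤ ·) D)
    (hinj : ∀ P ∈ D, Module.Injective A P) : Module.Injective A (sSup D : Submodule A I) := by
  refine Module.Baer.injective fun J φ ↦ ?_
  let ψ : J →ₗ[A] I := (sSup D).subtype ∘ₗ φ
  have hfg : (LinearMap.range ψ).FG := by
    rw [LinearMap.range_eq_map]
    exact (IsNoetherian.noetherian _).map ψ
  have hle : LinearMap.range ψ ≤ sSup D := by
    rintro _ ⟨x, rfl⟩
    exact (φ x).2
  obtain ⟨P, hPD, hP⟩ :=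
    (CompleteLattice.isCompactElement_iff_le_of_directed_sSup_le _ _).1
      ((Submodule.fg_iff_compact _).1 hfg) D hne hD hle
  obtain ⟨φ', hφ'⟩ := Module.Baer.of_injective (hinj P hPD) J
    (ψ.codRestrict P fun x ↦ hP ⟨x, rfl⟩)
  refine ⟨Submodule.inclusion (le_sSup hPD) ∘ₗ φ', fun x hx ↦ Subtype.ext ?_⟩
  have hval := congrArg P.subtype (hφ' x hx)
  exact hval

/-- **Bass' theorem**: over a Noetherian ring, a direct sum of injective modules is injective. -/
theorem directSum [IsNoetherianRing A] {ι : Type u} (N : ι → Type u)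
    [∀ i, AddCommGroup (N i)] [∀ i, Module A (N i)] (hinj : ∀ i, Module.Injective A (N i)) :
    Module.Injective A (Π₀ i, N i) := by
  classical
  refine Module.Baer.injective fun J φ ↦ ?_
  obtain ⟨S, hS⟩ := IsNoetherian.noetherian (⊤ : Submodule A J)
  let s : Finset ι := S.biUnion fun x ↦ (φ x).support
  have hs : ∀ i ∉ s, ∀ x, φ x i = 0 := by
    intro i hi x
    have hx : x ∈ Submodule.span A (S : Set J) := hS ▸ Submodule.mem_top
    have hle : Submodule.span A (S : Set J) ≤ LinearMap.ker (DFinsupp.lapply i ∘ₗ φ) := by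
      refine Submodule.span_le.2 fun y hy ↦ ?_
      by_contra hne
      exact hi (Finset.mem_biUnion.2 ⟨y, hy, DFinsupp.mem_support_iff.2 hne⟩)
    exact hle hx
  choose φ' hφ' using fun i ↦ Module.Baer.of_injective (hinj i) J (DFinsupp.lapply i ∘ₗ φ)
  refine ⟨LinearMap.toSpanSingleton A _ (DFinsupp.mk s fun i ↦ φ' i 1), fun x hx ↦ ?_⟩
  ext i
  by_cases hi : i ∈ s
  · have := hφ' i x hx
    have hmul : φ' i x = x • φ' i 1 := by rw [← map_smul, smul_eq_mul, mul_one]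
    simpa [hi, hmul] using this
  · simp [hi, hs i hi ⟨x, hx⟩]

theorem prod {P Q : Type u} [AddCommGroup P] [Module A P] [AddCommGroup Q] [Module A Q]
    (hP : Module.Injective A P) (hQ : Module.Injective A Q) : Module.Injective A (P × Q) where
  out X Y _ _ _ _ i hi φ := by
    obtain ⟨f, hf⟩ := hP.out i hi (LinearMap.fst A P Q ∘ₗ φ)
    obtain ⟨g, hg⟩ := hQ.out i hi (LinearMap.snd A P Q ∘ₗ φ)
    exact ⟨f.prod g, fun x ↦ Prod.ext (hf x) (hg x)⟩

theorem sup_of_disjoint {I : Type u} [AddCommGroup I] [Module A I] {P Q : Submodule A I}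
    (hP : Module.Injective A P) (hQ : Module.Injective A Q) (h : Disjoint P Q) :
    Module.Injective A (P ⊔ Q : Submodule A I) := by
  let c : P × Q →ₗ[A] I := P.subtype.coprod Q.subtype
  have hc : Function.Injective c := by
    rw [← LinearMap.ker_eq_bot, LinearMap.ker_coprod_of_disjoint_range] <;> simp [h]
  have hr : LinearMap.range c = P ⊔ Q := by simp [c, LinearMap.range_coprod]
  exact of_linearEquiv ((LinearEquiv.ofInjective c hc).trans (LinearEquiv.ofEq _ _ hr))
    (prod hP hQ)

theorem exists_isCompl {I : Type u} [AddCommGroup I] [Module A I] {P : Submodule A I}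
    (hP : Module.Injective A P) : ∃ Q, IsCompl P Q := by
  obtain ⟨r, hr⟩ := hP.out P.subtype P.injective_subtype LinearMap.id
  exact ⟨LinearMap.ker r, LinearMap.isCompl_of_proj hr⟩

theorem of_isCompl {I : Type u} [AddCommGroup I] [Module A I] {P Q : Submodule A I}
    (hI : Module.Injective A I) (h : IsCompl P Q) : Module.Injective A Q where
  out X Y _ _ _ _ i hi φ := by
    obtain ⟨f, hf⟩ := hI.out i hi (Q.subtype ∘ₗ φ)
    exact ⟨Submodule.projectionOnto Q P h.symm ∘ₗ f, fun x ↦ by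
      simp only [LinearMap.comp_apply, hf, Submodule.subtype_apply,
        Submodule.projectionOnto_apply_left]⟩

/-! ### Injective submodules of bounded size -/

/-- Formal expressions in one generator built from addition, scalar multiplication and solutions
of extension problems along left ideals. -/
inductive ExtTerm (A : Type u) [Ring A] : Type u
  | gen : ExtTerm A
  | add : ExtTerm A → ExtTerm A → ExtTerm A
  | smul : A → ExtTerm A → ExtTerm A
  | ext : (J : Ideal A) → (J → ExtTerm A) → ExtTerm A

open Classical in
/-- A solution `y` to the extension problem `x • y = φ x`, or `0` if there is none. -/
def solution {I : Type u} [AddCommGroup I] [Module A I] (J : Ideal A) (φ : J → I) : I :=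
  if h : ∃ y : I, ∀ x : J, (x : A) • y = φ x then h.choose else 0

/-- Evaluation of a formal expression at an element of a module. -/
def ExtTerm.value {I : Type u} [AddCommGroup I] [Module A I] (x : I) : ExtTerm A → I
  | gen => x
  | add s t => s.value x + t.value x
  | smul a t => a • t.value x
  | ext J φ => solution J fun j ↦ (φ j).value x

/-- The submodule of values at `x` of formal expressions. -/
def extClosure {I : Type u} [AddCommGroup I] [Module A I] (x : I) : Submodule A I where
  carrier := Set.range (ExtTerm.value (A := A) x)
  add_mem' := by
    rintro _ _ ⟨s, rfl⟩ ⟨t, rfl⟩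
    exact ⟨s.add t, rfl⟩
  zero_mem' := ⟨ExtTerm.gen.smul 0, zero_smul A x⟩
  smul_mem' := by
    rintro a _ ⟨t, rfl⟩
    exact ⟨t.smul a, rfl⟩

theorem mem_extClosure_self {I : Type u} [AddCommGroup I] [Module A I] (x : I) :
    x ∈ extClosure (A := A) x :=
  ⟨ExtTerm.gen, rfl⟩

theorem injective_extClosure {I : Type u} [AddCommGroup I] [Module A I]
    (hI : Module.Injective A I) (x : I) : Module.Injective A (extClosure (A := A) x) := by
  refine Module.Baer.injective fun J φ ↦ ?_
  choose t ht using fun j ↦ (φ j).2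
  have hex : ∃ y : I, ∀ j : J, (j : A) • y = (t j).value x := by
    obtain ⟨ψ, hψ⟩ := Module.Baer.of_injective hI J ((extClosure (A := A) x).subtype ∘ₗ φ)
    refine ⟨ψ 1, fun j ↦ ?_⟩
    rw [← map_smul, smul_eq_mul, mul_one, hψ j j.2, ht]
    rfl
  have hsol : ∀ j : J, (j : A) • (ExtTerm.ext J t).value x = (φ j : I) := by
    intro j
    rw [← ht, ExtTerm.value, solution, dif_pos hex]
    exact hex.choose_spec j
  exact ⟨LinearMap.toSpanSingleton A _ ⟨_, ExtTerm.ext J t, rfl⟩,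
    fun j hj ↦ Subtype.ext (hsol ⟨j, hj⟩)⟩

/-- The module `extClosure x` is a quotient of a free module which depends only on the ring. -/
theorem exists_quotient_equiv_extClosure {I : Type u} [AddCommGroup I] [Module A I] (x : I) :
    ∃ S : Submodule A (ExtTerm A →₀ A), Nonempty ((_ ⧸ S) ≃ₗ[A] extClosure (A := A) x) := by
  let v : ExtTerm A → extClosure (A := A) x := fun t ↦ ⟨t.value x, t, rfl⟩
  have hv : Function.Surjective (Finsupp.linearCombination A v) := by
    rintro ⟨_, t, rfl⟩
    exact ⟨Finsupp.single t 1, by simp [v]⟩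
  exact ⟨_, ⟨LinearMap.quotKerEquivOfSurjective _ hv⟩⟩

/-! ### Injective precovers -/

/-- The index type for the injective precover of `M`: an injective quotient of a fixed free module
together with a map to `M`. -/
abbrev PrecoverIndex (A : Type u) [Ring A] (M : Type u) [AddCommGroup M] [Module A M] : Type u :=
  Σ S : {S : Submodule A (ExtTerm A →₀ A) // Module.Injective A (_ ⧸ S)}, (_ ⧸ S.1) →ₗ[A] M

/-- If every small injective module mapping to `M` factors through `f`, then so does every
injective module. -/
theorem factors_of_extClosure_factors [IsNoetherianRing A] {E M I : Type u} [AddCommGroup E]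
    [Module A E] [AddCommGroup M] [Module A M] [AddCommGroup I] [Module A I]
    (hI : Module.Injective A I) (f : E →ₗ[A] M) (g : I →ₗ[A] M)
    (hf : ∀ (J : Type u) [AddCommGroup J] [Module A J], Module.Injective A J →
      ∀ (g : J →ₗ[A] M) (x : J), ∃ h : extClosure (A := A) x →ₗ[A] E,
        f ∘ₗ h = g ∘ₗ (extClosure x).subtype) :
    ∃ h : I →ₗ[A] E, f ∘ₗ h = g := by
  let D : Set (I →ₗ.[A] E) := {p | Module.Injective A p.domain ∧ ∀ x, f (p x) = g x}
  have hbot : (⊥ : I →ₗ.[A] E) ∈ D := by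
    have hsub : Subsingleton (⊥ : I →ₗ.[A] E).domain :=
      inferInstanceAs (Subsingleton (⊥ : Submodule A I))
    exact ⟨⟨fun _ _ _ _ _ _ _ _ _ ↦ ⟨0, fun _ ↦ Subsingleton.elim _ _⟩⟩,
      fun x ↦ by simp [Subsingleton.elim x 0]⟩
  obtain ⟨p, -, hp⟩ := zorn_le_nonempty₀ D (fun c hcD hc q hq ↦ by
    have hne : c.Nonempty := ⟨q, hq⟩
    have hdir := hc.directedOn
    refine ⟨LinearPMap.sSup c hdir, ⟨?_, fun x ↦ ?_⟩, fun r hr ↦ LinearPMap.le_sSup hdir hr⟩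
    · refine sSup_of_directedOn (hne.image _)
        (DirectedOn.mono_comp LinearPMap.domain_mono.monotone hdir) ?_
      rintro _ ⟨r, hr, rfl⟩
      exact (hcD hr).1
    · obtain ⟨r, hr, hx⟩ := (LinearPMap.mem_domain_sSup_iff hne hdir).1 x.2
      rw [← (LinearPMap.le_sSup hdir hr).2 (x := ⟨x, hx⟩) (y := x) rfl]
      exact (hcD hr).2 ⟨x, hx⟩) ⊥ hbot
  obtain ⟨Q, hQ⟩ := exists_isCompl hp.prop.1
  have hQ_bot : Q = ⊥ := by
    rw [Submodule.eq_bot_iff]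
    intro x hx
    have hQ_inj := of_isCompl hI hQ
    obtain ⟨h, hh⟩ := hf Q hQ_inj (g ∘ₗ Q.subtype) ⟨x, hx⟩
    let e := Q.equivSubtypeMap (extClosure (A := A) (⟨x, hx⟩ : Q))
    let q : I →ₗ.[A] E := ⟨_, h ∘ₗ e.symm.toLinearMap⟩
    have hq : ∀ y, f (q y) = g y := fun y ↦ by
      obtain ⟨z, rfl⟩ := e.surjective y
      change f (h (e.symm (e z))) = g z
      rw [e.symm_apply_apply]
      exact LinearMap.congr_fun hh z
    have hdisj : Disjoint p.domain q.domain :=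
      hQ.disjoint.mono_right (Submodule.map_subtype_le _ _)
    have hsup : p.sup q (LinearPMap.sup_h_of_disjoint p q hdisj) ∈ D := by
      refine ⟨sup_of_disjoint hp.prop.1
        (of_linearEquiv e (injective_extClosure hQ_inj _)) hdisj, fun y ↦ ?_⟩
      obtain ⟨a, ha, b, hb, hab⟩ := Submodule.mem_sup.1 y.2
      rw [LinearPMap.sup_apply _ ⟨a, ha⟩ ⟨b, hb⟩ y hab, map_add, hp.prop.2, hq, ← map_add, hab]
    have hle := hp.le_of_ge hsup (LinearPMap.left_le_sup _ _ _)
    have hxq : x ∈ q.domain := ⟨⟨x, hx⟩, mem_extClosure_self _, rfl⟩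
    exact Submodule.disjoint_def.1 hQ.disjoint x
      (hle.1 (Submodule.mem_sup_right hxq)) hx
  have htop : p.domain = ⊤ := by simpa [hQ_bot] using hQ.sup_eq_top
  refine ⟨p.toFun ∘ₗ LinearMap.codRestrict p.domain LinearMap.id (by simp [htop]),
    LinearMap.ext fun x ↦ hp.prop.2 _⟩

/-- Over a Noetherian ring, a family of maps from injective modules to `M` factors through a single
map from an injective module. -/
theorem exists_injective_factoring_family [IsNoetherianRing A] {M ι : Type u} [AddCommGroup M]
    [Module A M] (N : ι → Type u) [∀ i, AddCommGroup (N i)] [∀ i, Module A (N i)]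
    (hinj : ∀ i, Module.Injective A (N i)) (u : ∀ i, N i →ₗ[A] M) :
    ∃ (E : ModuleCat.{u} A) (f : E →ₗ[A] M), Module.Injective A E ∧
      ∀ i, ∃ h : N i →ₗ[A] E, f ∘ₗ h = u i := by
  classical
  exact ⟨ModuleCat.of A (Π₀ i, N i), DFinsupp.lsum ℕ u, directSum N hinj,
    fun i ↦ ⟨DFinsupp.lsingle i, LinearMap.ext fun y ↦ by simp⟩⟩

/-- Over a Noetherian ring every module has a precover by injective modules. -/
theorem exists_precover [IsNoetherianRing A] (M : Type u) [AddCommGroup M] [Module A M] :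
    ∃ (E : ModuleCat.{u} A) (f : E →ₗ[A] M), Module.Injective A E ∧
      ∀ (I : Type u) [AddCommGroup I] [Module A I], Module.Injective A I →
        ∀ g : I →ₗ[A] M, ∃ h : I →ₗ[A] E, f ∘ₗ h = g := by
  obtain ⟨E, f, hE, hf⟩ := exists_injective_factoring_family
    (fun i : PrecoverIndex A M ↦ (ExtTerm A →₀ A) ⧸ i.1.1) (fun i ↦ i.1.2) (fun i ↦ i.2)
  refine ⟨E, f, hE, fun I _ _ hI g ↦ factors_of_extClosure_factors hI f g fun J _ _ hJ g x ↦ ?_⟩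
  obtain ⟨S, ⟨e⟩⟩ := exists_quotient_equiv_extClosure (A := A) x
  obtain ⟨h, hh⟩ := hf ⟨⟨S, of_linearEquiv e.symm (injective_extClosure hJ x)⟩,
    g ∘ₗ (extClosure x).subtype ∘ₗ e.toLinearMap⟩
  refine ⟨h ∘ₗ e.symm.toLinearMap, LinearMap.ext fun y ↦ ?_⟩
  simpa using LinearMap.congr_fun hh (e.symm y)

end Module.Injective

/-- If `0 → L → I → C → 0` is exact and all higher `Ext` groups from `C` to `M` vanish, then
every map `L → M` extends to `I`. -/
theorem ExtVanishAll.exists_extension {A : Type u} [Ring A] {L I C M : Type u}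
    [AddCommGroup L] [Module A L] [AddCommGroup I] [Module A I] [AddCommGroup C] [Module A C]
    [AddCommGroup M] [Module A M] (hext : ExtVanishAll A C M) {i : L →ₗ[A] I} {p : I →ₗ[A] C}
    (hi : Function.Injective i) (hp : Function.Surjective p) (hip : Function.Exact i p)
    (g : L →ₗ[A] M) : ∃ g' : I →ₗ[A] M, g' ∘ₗ i = g := by
  obtain ⟨Q, hQ, hexact⟩ := hext
  have := hQ.proj
  obtain ⟨α, hα⟩ := Module.projective_lifting_property p Q.ε hp
  have hα' : ∀ x, p (α x) = Q.ε x := fun x ↦ LinearMap.congr_fun hα x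
  have hmem : ∀ x, ∃ l, i l = α (Q.d 0 x) := fun x ↦
    (hip _).1 (by rw [hα', hQ.exact0.apply_apply_eq_zero])
  choose β₀ hβ₀ using hmem
  let β : Q.P 1 →ₗ[A] L :=
    { toFun := β₀
      map_add' x y := hi (by simp [hβ₀])
      map_smul' a x := hi (by simp [hβ₀]) }
  have hβ : ∀ x, i (β x) = α (Q.d 0 x) := hβ₀
  obtain ⟨γ, hγ⟩ := (hexact 0 (g ∘ₗ β)).1 (LinearMap.ext fun x ↦ by
    have : β (Q.d 1 x) = 0 :=
      hi (by rw [hβ, (hQ.exactSucc 0).apply_apply_eq_zero, map_zero, map_zero])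
    simp [this])
  have hγ' : ∀ x, γ (Q.d 0 x) = g (β x) := fun x ↦ LinearMap.congr_fun hγ x
  let s : L × Q.P 0 →ₗ[A] I := i.coprod α
  have hs : Function.Surjective s := by
    intro y
    obtain ⟨x, hx⟩ := hQ.surj (p y)
    obtain ⟨l, hl⟩ := (hip (y - α x)).1 (by rw [map_sub, hα', hx, sub_self])
    exact ⟨(l, x), by simp [s, hl]⟩
  have hker : LinearMap.ker s ≤ LinearMap.ker (g.coprod γ) := by
    rintro ⟨l, x⟩ hlx
    replace hlx : i l + α x = 0 := hlx
    have hx : Q.ε x = 0 := by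
      have := congrArg p hlx
      rwa [map_add, hip.apply_apply_eq_zero, zero_add, hα', map_zero] at this
    obtain ⟨y, rfl⟩ := (hQ.exact0 x).1 hx
    have hl : l = -β y := hi (by rw [map_neg, hβ]; exact eq_neg_of_add_eq_zero_left hlx)
    simp [hl, hγ']
  refine ⟨(LinearMap.ker s).liftQ _ hker ∘ₗ (s.quotKerEquivOfSurjective hs).symm,
    LinearMap.ext fun l ↦ ?_⟩
  have : (s.quotKerEquivOfSurjective hs).symm (i l) = (LinearMap.ker s).mkQ (l, 0) := by
    rw [LinearEquiv.symm_apply_eq]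
    simp [s]
  simp [this]

theorem IsRightNoetherianRing.isNoetherianRing {R : Type u} [Ring R]
    (h : IsRightNoetherianRing R) : IsNoetherianRing Rᵐᵒᵖ :=
  have : IsNoetherian Rᵐᵒᵖ R := ⟨h⟩
  isNoetherian_of_linearEquiv
    { opAddEquiv (α := R) with map_smul' := fun _ _ ↦ rfl : R ≃ₗ[Rᵐᵒᵖ] Rᵐᵒᵖ }

/-- Let `R` be a right Noetherian ring and `M` a right `R`-module, and let
`ℰ` be the class of right `R`-modules of finite injective dimension. If `Ext^{i≥1}_R(L, M) = 0`
for all `L ∈ ℰ` then `M` has an `ℰ`-precover `f : E → M` with `E` injective. -/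
theorem exists_injective_precover_of_ext_vanishing
    (R : Type u) [Ring R] (hRnoeth : IsRightNoetherianRing R)
    (M : Type u) [AddCommGroup M] [Module Rᵐᵒᵖ M]
    (hext : ∀ (L : Type u) [AddCommGroup L] [Module Rᵐᵒᵖ L],
      (∃ n, InjDimLE Rᵐᵒᵖ L n) → ExtVanishAll Rᵐᵒᵖ L M) :
    ∃ (E : ModuleCat.{u} Rᵐᵒᵖ) (f : (E : Type u) →ₗ[Rᵐᵒᵖ] M),
      Module.Injective Rᵐᵒᵖ E ∧ (∃ n, InjDimLE Rᵐᵒᵖ E n) ∧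
      ∀ (L : Type u) [AddCommGroup L] [Module Rᵐᵒᵖ L], (∃ n, InjDimLE Rᵐᵒᵖ L n) →
        ∀ g : L →ₗ[Rᵐᵒᵖ] M, ∃ h : L →ₗ[Rᵐᵒᵖ] (E : Type u), f.comp h = g := by
  have := hRnoeth.isNoetherianRing
  obtain ⟨E, f, hE, hf⟩ := Module.Injective.exists_precover (A := Rᵐᵒᵖ) M
  refine ⟨E, f, hE, ⟨0, hE⟩, ?_⟩
  rintro L _ _ ⟨n | n, hn⟩ g
  · exact hf L hn g
  · obtain ⟨m, hm, hC⟩ := hn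
    obtain ⟨g', hg'⟩ := (hext _ ⟨n, hC⟩).exists_extension m.inj (Submodule.mkQ_surjective _)
      (LinearMap.exact_map_mkQ_range m.f) g
    obtain ⟨h, hh⟩ := hf m.E hm g'
    exact ⟨h ∘ₗ m.f, by rw [← LinearMap.comp_assoc, hh, hg']⟩
end
end

section
/- Let T be a Wakamatsu tilting (S,R)-bimodule and M a Gorenstein injective right R-module. If either the projective dimension of T as a right R-module is finite, or the injective dimension of T as a right R-module is finite, then M belongs to the Bass class ℬ_T(R). (In particular, no tensorly-faithfulness assumption on T is needed.) -/
open Function MulOpposite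

universe u

noncomputable section

/-! ## Vanishing of `Ext` and dimension shifting -/

section ExtVanishing

open CategoryTheory Abelian

variable {A : Type u} [Ring A]

/-- `Ext^n_A(X, Y) = 0`, for Mathlib's `Ext`. -/
def ExtVanishes (A : Type u) [Ring A] (X Y : Type u) [AddCommGroup X] [Module A X]
    [AddCommGroup Y] [Module A Y] (n : ℕ) : Prop :=
  Subsingleton (Ext.{u} (ModuleCat.of A X) (ModuleCat.of A Y) n)

section

variable (X Y : Type u) [AddCommGroup X] [Module A X] [AddCommGroup Y] [Module A Y]

theorem ExtVanishes.of_projective [Module.Projective A X] (n : ℕ) : ExtVanishes A X Y (n + 1) :=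
  Ext.subsingleton_of_projective _ _ n

theorem ExtVanishes.of_injective [Module.Injective A Y] (n : ℕ) : ExtVanishes A X Y (n + 1) :=
  have := Module.injective_object_of_injective_module A Y
  Ext.subsingleton_of_injective _ _ n

variable {X Y}

theorem ExtVanishes.congr_right {Y' : Type u} [AddCommGroup Y'] [Module A Y'] (e : Y ≃ₗ[A] Y')
    {n : ℕ} (h : ExtVanishes A X Y n) : ExtVanishes A X Y' n := by
  refine subsingleton_of_forall_eq 0 fun x => ?_
  have h0 : x.comp (Ext.mk₀ (ModuleCat.ofHom e.symm.toLinearMap)) (add_zero n) = 0 :=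
    h.elim _ _
  have h1 : (x.comp (Ext.mk₀ (ModuleCat.ofHom e.symm.toLinearMap)) (add_zero n)).comp
      (Ext.mk₀ (ModuleCat.ofHom e.toLinearMap)) (add_zero n) = x := by
    rw [Ext.comp_assoc_of_second_deg_zero, Ext.mk₀_comp_mk₀, ← ModuleCat.ofHom_comp]
    simp
  rw [← h1, h0, Ext.zero_comp]

end

variable {X₁ X₂ X₃ : Type u} [AddCommGroup X₁] [Module A X₁] [AddCommGroup X₂] [Module A X₂]
  [AddCommGroup X₃] [Module A X₃] {f : X₁ →ₗ[A] X₂} {g : X₂ →ₗ[A] X₃}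

/-- The short complex of modules attached to a pair of maps that is exact in the middle. -/
abbrev shortComplexOfExact (hfg : Function.Exact f g) : ShortComplex (ModuleCat.{u} A) :=
  ShortComplex.mk (ModuleCat.ofHom f) (ModuleCat.ofHom g)
    (by ext x; exact hfg.apply_apply_eq_zero x)

theorem shortExact_shortComplexOfExact (hf : Function.Injective f) (hfg : Function.Exact f g)
    (hg : Function.Surjective g) : (shortComplexOfExact hfg).ShortExact where
  exact := (ShortComplex.ShortExact.moduleCat_exact_iff_function_exact _).2 hfg
  mono_f := (ModuleCat.mono_iff_injective _).2 hf
  epi_g := (ModuleCat.epi_iff_surjective _).2 hg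

variable (hf : Function.Injective f) (hfg : Function.Exact f g) (hg : Function.Surjective g)
  {Y : Type u} [AddCommGroup Y] [Module A Y] {n : ℕ}

include hf hfg hg

theorem ExtVanishes.right_of_middle (h₂ : ExtVanishes A Y X₂ n)
    (h₁ : ExtVanishes A Y X₁ (n + 1)) : ExtVanishes A Y X₃ n := by
  refine subsingleton_of_forall_eq 0 fun x => ?_
  obtain ⟨y, rfl⟩ := Ext.covariant_sequence_exact₃ _
    (shortExact_shortComplexOfExact hf hfg hg) x rfl (h₁.elim _ _)
  rw [show y = 0 from h₂.elim _ _, Ext.zero_comp]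

theorem ExtVanishes.left_of_middle (h₃ : ExtVanishes A Y X₃ n)
    (h₂ : ExtVanishes A Y X₂ (n + 1)) : ExtVanishes A Y X₁ (n + 1) := by
  refine subsingleton_of_forall_eq 0 fun x => ?_
  obtain ⟨y, rfl⟩ := Ext.covariant_sequence_exact₁ _
    (shortExact_shortComplexOfExact hf hfg hg) x (h₂.elim _ _) rfl
  rw [show y = 0 from h₃.elim _ _, Ext.zero_comp]

theorem ExtVanishes.exists_lift (h₁ : ExtVanishes A Y X₁ 1) (φ : Y →ₗ[A] X₃) :
    ∃ ψ : Y →ₗ[A] X₂, g.comp ψ = φ := by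
  obtain ⟨y, hy⟩ := Ext.covariant_sequence_exact₃ (ModuleCat.of A Y)
    (shortExact_shortComplexOfExact hf hfg hg) (Ext.mk₀ (ModuleCat.ofHom φ)) rfl (h₁.elim _ _)
  obtain ⟨ψ, rfl⟩ := Ext.addEquiv₀.symm.surjective y
  refine ⟨ψ.hom, ?_⟩
  rw [Ext.addEquiv₀_symm_apply, Ext.mk₀_comp_mk₀] at hy
  exact congrArg ModuleCat.Hom.hom ((Ext.mk₀_bijective _ _).1 hy)

theorem ExtVanishes.one_of_exists_lift (h₂ : ExtVanishes A Y X₂ 1)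
    (h : ∀ φ : Y →ₗ[A] X₃, ∃ ψ : Y →ₗ[A] X₂, g.comp ψ = φ) : ExtVanishes A Y X₁ 1 := by
  refine subsingleton_of_forall_eq 0 fun x => ?_
  have hS := shortExact_shortComplexOfExact hf hfg hg
  obtain ⟨y, rfl⟩ := Ext.covariant_sequence_exact₁ _ hS x (h₂.elim _ _) rfl
  obtain ⟨φ, rfl⟩ := Ext.addEquiv₀.symm.surjective y
  obtain ⟨ψ, hψ⟩ := h φ.hom
  have : φ = ModuleCat.ofHom ψ ≫ (shortComplexOfExact hfg).g := by
    ext x; exact (LinearMap.congr_fun hψ x).symm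
  rw [Ext.addEquiv₀_symm_apply, this, ← Ext.mk₀_comp_mk₀, Ext.comp_assoc_of_second_deg_zero,
    hS.comp_extClass, Ext.comp_zero]

theorem ExtVanishes.right_of_left (h₁ : ExtVanishes A X₁ Y n)
    (h₂ : ExtVanishes A X₂ Y (n + 1)) : ExtVanishes A X₃ Y (n + 1) := by
  refine subsingleton_of_forall_eq 0 fun x => ?_
  obtain ⟨y, rfl⟩ := Ext.contravariant_sequence_exact₃
    (shortExact_shortComplexOfExact hf hfg hg) _ x (h₂.elim _ _) (add_comm 1 n)
  rw [show y = 0 from h₁.elim _ _, Ext.comp_zero]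

theorem ExtVanishes.left_of_right (h₂ : ExtVanishes A X₂ Y n)
    (h₃ : ExtVanishes A X₃ Y (n + 1)) : ExtVanishes A X₁ Y n := by
  refine subsingleton_of_forall_eq 0 fun x => ?_
  obtain ⟨y, rfl⟩ := Ext.contravariant_sequence_exact₁
    (shortExact_shortComplexOfExact hf hfg hg) _ x (add_comm 1 n) (h₃.elim _ _)
  rw [show y = 0 from h₂.elim _ _, Ext.comp_zero]

theorem ExtVanishes.exists_extend (h₃ : ExtVanishes A X₃ Y 1) (φ : X₁ →ₗ[A] Y) :
    ∃ ψ : X₂ →ₗ[A] Y, ψ.comp f = φ := by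
  obtain ⟨y, hy⟩ := Ext.contravariant_sequence_exact₁
    (shortExact_shortComplexOfExact hf hfg hg) (ModuleCat.of A Y)
    (Ext.mk₀ (ModuleCat.ofHom φ)) rfl (h₃.elim _ _)
  obtain ⟨ψ, rfl⟩ := Ext.addEquiv₀.symm.surjective y
  refine ⟨ψ.hom, ?_⟩
  rw [Ext.addEquiv₀_symm_apply, Ext.mk₀_comp_mk₀] at hy
  exact congrArg ModuleCat.Hom.hom ((Ext.mk₀_bijective _ _).1 hy)

theorem ExtVanishes.one_of_exists_extend (h₂ : ExtVanishes A X₂ Y 1)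
    (h : ∀ φ : X₁ →ₗ[A] Y, ∃ ψ : X₂ →ₗ[A] Y, ψ.comp f = φ) : ExtVanishes A X₃ Y 1 := by
  refine subsingleton_of_forall_eq 0 fun x => ?_
  have hS := shortExact_shortComplexOfExact hf hfg hg
  obtain ⟨y, rfl⟩ := Ext.contravariant_sequence_exact₃ hS _ x (h₂.elim _ _) (add_zero 1)
  obtain ⟨φ, rfl⟩ := Ext.addEquiv₀.symm.surjective y
  obtain ⟨ψ, hψ⟩ := h φ.hom
  have : φ = (shortComplexOfExact hfg).f ≫ ModuleCat.ofHom ψ := by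
    ext x; exact (LinearMap.congr_fun hψ x).symm
  rw [Ext.addEquiv₀_symm_apply, this, ← Ext.mk₀_comp_mk₀, hS.extClass_comp_assoc]

end ExtVanishing

/-! ## Computing `Ext` vanishing by resolutions -/

section Resolutions

variable {A : Type u} [Ring A]

theorem LinearMap.exists_comp_eq_of_surjective {A B C Y : Type*} [Ring A] [AddCommGroup B]
    [Module A B] [AddCommGroup C] [Module A C] [AddCommGroup Y] [Module A Y]
    {g : B →ₗ[A] C} (hg : Function.Surjective g) (φ : B →ₗ[A] Y)
    (h : ∀ b, g b = 0 → φ b = 0) : ∃ ψ : C →ₗ[A] Y, ψ.comp g = φ := by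
  refine ⟨((LinearMap.ker g).liftQ φ fun b hb => h b hb).comp
    (g.quotKerEquivOfSurjective hg).symm.toLinearMap, LinearMap.ext fun b => ?_⟩
  have : (g.quotKerEquivOfSurjective hg).symm (g b) = (LinearMap.ker g).mkQ b := by
    rw [LinearEquiv.symm_apply_eq]; rfl
  simp only [LinearMap.comp_apply, LinearEquiv.coe_coe, this]
  exact Submodule.liftQ_apply _ _ _

theorem exact_subtype_range_rangeRestrict {A B C D : Type*} [Ring A] [AddCommGroup B]
    [Module A B] [AddCommGroup C] [Module A C] [AddCommGroup D] [Module A D]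
    {f : B →ₗ[A] C} {g : C →ₗ[A] D} (h : Function.Exact f g) :
    Function.Exact (LinearMap.range f).subtype g.rangeRestrict := fun c => by
  have := h c
  simp_all [Subtype.ext_iff]

theorem exact_subtype_range {A B C D : Type*} [Ring A] [AddCommGroup B]
    [Module A B] [AddCommGroup C] [Module A C] [AddCommGroup D] [Module A D]
    {f : B →ₗ[A] C} {g : C →ₗ[A] D} (h : Function.Exact f g) :
    Function.Exact (LinearMap.range f).subtype g := fun c => by
  have := h c
  simp_all

section

variable {P₀ P₁ P₂ Y : Type*} [AddCommGroup P₀] [Module A P₀] [AddCommGroup P₁] [Module A P₁]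
  [AddCommGroup P₂] [Module A P₂] [AddCommGroup Y] [Module A Y]
  {d₁ : P₂ →ₗ[A] P₁} {d₀ : P₁ →ₗ[A] P₀}

theorem exact_comp_of_exists_extend (h : Function.Exact d₁ d₀)
    (hY : ∀ φ : LinearMap.range d₀ →ₗ[A] Y, ∃ ψ : P₀ →ₗ[A] Y,
      ψ.comp (LinearMap.range d₀).subtype = φ) :
    Function.Exact (fun f : P₀ →ₗ[A] Y => f.comp d₀) (fun f : P₁ →ₗ[A] Y => f.comp d₁) := by
  refine fun φ => ⟨fun hφ => ?_, ?_⟩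
  · obtain ⟨φ', rfl⟩ := LinearMap.exists_comp_eq_of_surjective d₀.surjective_rangeRestrict φ
      fun b hb => by
        obtain ⟨c, rfl⟩ := (h b).1 (congrArg Subtype.val hb)
        exact LinearMap.congr_fun hφ c
    obtain ⟨ψ, rfl⟩ := hY φ'
    exact ⟨ψ, rfl⟩
  · rintro ⟨ψ, rfl⟩
    ext x
    simp [h.apply_apply_eq_zero]

theorem exists_extend_of_exact_comp (h : Function.Exact d₁ d₀)
    (hY : Function.Exact (fun f : P₀ →ₗ[A] Y => f.comp d₀) (fun f : P₁ →ₗ[A] Y => f.comp d₁))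
    (φ : LinearMap.range d₀ →ₗ[A] Y) :
    ∃ ψ : P₀ →ₗ[A] Y, ψ.comp (LinearMap.range d₀).subtype = φ := by
  obtain ⟨ψ, hψ⟩ := (hY (φ.comp d₀.rangeRestrict)).1 (by
    ext x
    have : d₀.rangeRestrict (d₁ x) = 0 := Subtype.ext (h.apply_apply_eq_zero x)
    simp [this])
  refine ⟨ψ, LinearMap.ext ?_⟩
  rintro ⟨_, x, rfl⟩
  exact LinearMap.congr_fun hψ x

end

namespace ResolutionData.IsProjResolution

variable {X Y : Type u} [AddCommGroup X] [Module A X] [AddCommGroup Y] [Module A Y]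
  {Q : ResolutionData A X} (hQ : Q.IsProjResolution)

include hQ

theorem extVanishes_range (h : ∀ n, ExtVanishes A X Y (n + 1)) (j n : ℕ) :
    ExtVanishes A (LinearMap.range (Q.d j)) Y (n + 1) := by
  induction j generalizing n with
  | zero =>
    have := hQ.proj 0
    exact .left_of_right (Submodule.injective_subtype _) (exact_subtype_range hQ.exact0) hQ.surj
      (.of_projective _ _ n) (h (n + 1))
  | succ j ih =>
    have := hQ.proj (j + 1)
    exact .left_of_right (Submodule.injective_subtype _)
      (exact_subtype_range_rangeRestrict (hQ.exactSucc j)) (LinearMap.surjective_rangeRestrict _)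
      (.of_projective _ _ n) (ih (n + 1))

theorem exact_comp (h : ∀ n, ExtVanishes A X Y (n + 1)) (j : ℕ) :
    Function.Exact (fun f : Q.P j →ₗ[A] Y => f.comp (Q.d j))
      (fun f : Q.P (j + 1) →ₗ[A] Y => f.comp (Q.d (j + 1))) := by
  refine exact_comp_of_exists_extend (hQ.exactSucc j) ?_
  cases j with
  | zero =>
    exact (h 0).exists_extend (Submodule.injective_subtype _) (exact_subtype_range hQ.exact0)
      hQ.surj
  | succ j =>
    exact (hQ.extVanishes_range h j 0).exists_extend (Submodule.injective_subtype _)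
      (exact_subtype_range_rangeRestrict (hQ.exactSucc j)) (LinearMap.surjective_rangeRestrict _)

theorem extVanishes (h : ∀ j, Function.Exact (fun f : Q.P j →ₗ[A] Y => f.comp (Q.d j))
      (fun f : Q.P (j + 1) →ₗ[A] Y => f.comp (Q.d (j + 1)))) (n : ℕ) :
    ExtVanishes A X Y (n + 1) := by
  have key : ∀ n j, ExtVanishes A (LinearMap.range (Q.d j)) Y (n + 1) := by
    intro n
    induction n with
    | zero =>
      intro j
      have := hQ.proj (j + 1)
      exact .one_of_exists_extend (Submodule.injective_subtype _)
        (exact_subtype_range_rangeRestrict (hQ.exactSucc j))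
        (LinearMap.surjective_rangeRestrict _) (.of_projective _ _ 0)
        (exists_extend_of_exact_comp (hQ.exactSucc (j + 1)) (h (j + 1)))
    | succ n ih =>
      intro j
      have := hQ.proj (j + 1)
      exact .right_of_left (Submodule.injective_subtype _)
        (exact_subtype_range_rangeRestrict (hQ.exactSucc j))
        (LinearMap.surjective_rangeRestrict _) (ih (j + 1)) (.of_projective _ _ (n + 1))
  have := hQ.proj 0
  cases n with
  | zero =>
    exact .one_of_exists_extend (Submodule.injective_subtype _) (exact_subtype_range hQ.exact0)
      hQ.surj (.of_projective _ _ 0) (exists_extend_of_exact_comp (hQ.exactSucc 0) (h 0))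
  | succ n =>
    exact .right_of_left (Submodule.injective_subtype _) (exact_subtype_range hQ.exact0)
      hQ.surj (key n 0) (.of_projective _ _ (n + 1))

end ResolutionData.IsProjResolution

section

variable (A) (X : Type u) [AddCommGroup X] [Module A X]

/-- The iterated syzygies of `X` with respect to the free covers `Z →₀ A → Z`. -/
def freeSyzygy : ℕ → ModuleCat.{u} A
  | 0 => ModuleCat.of A X
  | n + 1 => ModuleCat.of A
      (LinearMap.ker (Finsupp.linearCombination A (id : freeSyzygy n → freeSyzygy n)))

/-- The standard free resolution of `X`. -/
def freeResolution : ResolutionData A X where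
  P n := freeSyzygy A X n →₀ A
  d n := (Submodule.subtype _).comp
    (Finsupp.linearCombination A (id : freeSyzygy A X (n + 1) → freeSyzygy A X (n + 1)))
  ε := Finsupp.linearCombination A (id : X → X)

theorem isProjResolution_freeResolution : (freeResolution A X).IsProjResolution := by
  have hsurj : ∀ n, Function.Surjective
      (Finsupp.linearCombination A (id : freeSyzygy A X n → freeSyzygy A X n)) := fun n =>
    Finsupp.linearCombination_id_surjective A _
  have hexact : ∀ n, Function.Exact ((freeResolution A X).d n)
      (Finsupp.linearCombination A (id : freeSyzygy A X n → freeSyzygy A X n)) := by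
    refine fun n x => ⟨fun hx => ?_, ?_⟩
    · obtain ⟨y, hy⟩ := hsurj (n + 1) ⟨x, hx⟩
      exact ⟨y, congrArg Subtype.val hy⟩
    · rintro ⟨y, rfl⟩
      exact (Finsupp.linearCombination A (id : freeSyzygy A X (n + 1) → _) y).2
  refine ⟨fun n => ?_, hsurj 0, hexact 0, fun n x => ?_⟩
  · exact inferInstanceAs (Module.Projective A (freeSyzygy A X n →₀ A))
  · rw [← hexact (n + 1) x]
    exact Submodule.coe_eq_zero

end

variable {X Y : Type u} [AddCommGroup X] [Module A X] [AddCommGroup Y] [Module A Y]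

theorem ExtVanishAll.extVanishes (h : ExtVanishAll A X Y) (n : ℕ) : ExtVanishes A X Y (n + 1) := by
  obtain ⟨Q, hQ, hexact⟩ := h
  exact hQ.extVanishes hexact n

theorem extVanishAll_of_extVanishes (h : ∀ n, ExtVanishes A X Y (n + 1)) : ExtVanishAll A X Y :=
  ⟨_, isProjResolution_freeResolution A X, (isProjResolution_freeResolution A X).exact_comp h⟩

end Resolutions

/-! ## Homological dimensions and cocycles of complexes of injectives -/

section Dimensions

variable {A : Type u} [Ring A]

theorem extVanishes_of_hasClassResolution_projective {n : ℕ} {X : ModuleCat.{u} A}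
    (h : HasClassResolution A (fun P => Module.Projective A P) n X)
    (Y : Type u) [AddCommGroup Y] [Module A Y] (i : ℕ) : ExtVanishes A X Y (n + i + 1) := by
  induction n generalizing X i with
  | zero =>
    have : Module.Projective A X := h
    exact .of_projective _ _ _
  | succ n ih =>
    obtain ⟨e, he, h⟩ := h
    rw [show n + 1 + i + 1 = (n + i + 1) + 1 by ring]
    exact .right_of_left (Submodule.injective_subtype _) e.f.exact_subtype_ker_map e.surj
      (ih h i) (.of_projective _ _ _)

theorem extVanishes_of_hasClassCoresolution_injective {n : ℕ} {X : ModuleCat.{u} A}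
    (h : HasClassCoresolution A (fun E => Module.Injective A E) n X)
    (Y : Type u) [AddCommGroup Y] [Module A Y]
    (hY : ∀ (I : Type u) [AddCommGroup I] [Module A I], Module.Injective A I →
      ∀ i, ExtVanishes A I Y (i + 1)) (i : ℕ) : ExtVanishes A X Y (i + 1) := by
  induction n generalizing X i with
  | zero => exact hY X h i
  | succ n ih =>
    obtain ⟨m, hm, h⟩ := h
    exact .left_of_right m.inj (LinearMap.exact_map_mkQ_range m.f) (Submodule.mkQ_surjective _)
      (hY _ hm i) (ih h (i + 1))

namespace ZComplex

variable {C : ZComplex A} (hC : C.IsExact)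

/-- The corestriction of a differential to the cocycles. -/
def toCocycles (j : ℤ) : C.P j →ₗ[A] LinearMap.ker (C.d (j + 1)) :=
  (C.d j).codRestrict _ fun x => (hC j).apply_apply_eq_zero x

theorem toCocycles_surjective (j : ℤ) : Function.Surjective (toCocycles hC j) := by
  rintro ⟨x, hx⟩
  obtain ⟨y, rfl⟩ := (hC j x).1 hx
  exact ⟨y, rfl⟩

theorem exact_subtype_toCocycles (j : ℤ) :
    Function.Exact (LinearMap.ker (C.d j)).subtype (toCocycles hC j) := fun x => by
  refine ⟨fun h => ⟨⟨x, congrArg Subtype.val h⟩, rfl⟩, ?_⟩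
  rintro ⟨y, rfl⟩
  exact Subtype.ext y.2

include hC

theorem extVanishes_cocycles (hinj : ∀ i, Module.Injective A (C.P i))
    {X : Type u} [AddCommGroup X] [Module A X] {m : ℕ}
    (h : ∀ j i, ExtVanishes A X (LinearMap.ker (C.d j)) (m + i + 1)) (j : ℤ) (i : ℕ) :
    ExtVanishes A X (LinearMap.ker (C.d j)) (i + 1) := by
  induction m with
  | zero => simpa using h j i
  | succ m ih =>
    refine ih fun j i => ?_
    obtain ⟨j, rfl⟩ : ∃ j', j = j' + 1 := ⟨j - 1, by ring⟩
    have := hinj j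
    refine .right_of_middle (Submodule.injective_subtype _) (exact_subtype_toCocycles hC j)
      (toCocycles_surjective hC j) (.of_injective _ _ _) ?_
    rw [show m + i + 1 + 1 = m + 1 + i + 1 by ring]
    exact h j i

theorem extVanishes_injective_cocycles (hinj : ∀ i, Module.Injective A (C.P i))
    (hI : ∀ (I : Type u) [AddCommGroup I] [Module A I], Module.Injective A I →
      ∀ i, Function.Exact
        (fun f : I →ₗ[A] C.P i => (C.d i).comp f)
        (fun f : I →ₗ[A] C.P (i + 1) => (C.d (i + 1)).comp f))
    (I : Type u) [AddCommGroup I] [Module A I] (hII : Module.Injective A I) (i : ℕ) (j : ℤ) :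
    ExtVanishes A I (LinearMap.ker (C.d j)) (i + 1) := by
  have := hinj j
  induction i generalizing j with
  | zero =>
    refine .one_of_exists_lift (Submodule.injective_subtype _) (exact_subtype_toCocycles hC j)
      (toCocycles_surjective hC j) (.of_injective _ _ _) fun φ => ?_
    obtain ⟨ψ, hψ⟩ := (hI I hII j ((Submodule.subtype _).comp φ)).1
      (LinearMap.ext fun x => (φ x).2)
    exact ⟨ψ, LinearMap.ext fun x => Subtype.ext (LinearMap.congr_fun hψ x)⟩
  | succ i ih =>
    exact .left_of_middle (Submodule.injective_subtype _) (exact_subtype_toCocycles hC j)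
      (toCocycles_surjective hC j) (ih (j + 1) (hinj _)) (.of_injective _ _ _)

end ZComplex

end Dimensions

/-! ## Character modules of right modules -/

section Characters

theorem exists_character_comp_eq {A B C : Type*} [AddCommGroup A] [AddCommGroup B]
    [AddCommGroup C] {f : A →+ B} {g : B →+ C} (hfg : ∀ b, g b = 0 → ∃ a, f a = b)
    (χ : CharacterModule B) (hχ : ∀ a, χ (f a) = 0) :
    ∃ ψ : CharacterModule C, ∀ b, ψ (g b) = χ b := by
  let χ' : CharacterModule (B ⧸ g.ker) := QuotientAddGroup.lift g.ker χ fun b hb => by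
    obtain ⟨a, rfl⟩ := hfg b hb
    exact hχ a
  obtain ⟨ψ, hψ⟩ := CharacterModule.dual_surjective_of_injective
    (QuotientAddGroup.kerLift g).toIntLinearMap (QuotientAddGroup.kerLift_injective g) χ'
  exact ⟨ψ, fun b => DFunLike.congr_fun hψ (QuotientAddGroup.mk b)⟩

theorem exists_character_apply_ne_zero_of_notMem {B : Type*} [AddCommGroup B]
    (H : AddSubgroup B) {b : B} (hb : b ∉ H) :
    ∃ χ : CharacterModule B, (∀ x ∈ H, χ x = 0) ∧ χ b ≠ 0 := by
  obtain ⟨c, hc⟩ := CharacterModule.exists_character_apply_ne_zero_of_ne_zero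
    (a := (QuotientAddGroup.mk b : B ⧸ H)) (by rwa [ne_eq, QuotientAddGroup.eq_zero_iff])
  refine ⟨AddMonoidHom.comp c (QuotientAddGroup.mk' H), fun x hx => ?_, hc⟩
  change c (QuotientAddGroup.mk x) = 0
  rw [(QuotientAddGroup.eq_zero_iff x).2 hx]
  exact map_zero c

variable {S : Type u} [Ring S]

section Module

variable {N : Type u} [AddCommGroup N] [Module Sᵐᵒᵖ N]

/-- The left `S`-action on the character module of a right `S`-module. -/
instance CharacterModule.instSMulOfRight : SMul S (CharacterModule N) :=
  ⟨fun s c => AddMonoidHom.comp c (DistribSMul.toAddMonoidHom N (op s))⟩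

theorem CharacterModule.left_smul_apply (s : S) (c : CharacterModule N) (n : N) :
    (s • c) n = c (op s • n) := rfl

/-- The left `S`-module structure on the character module of a right `S`-module. -/
instance CharacterModule.instModuleOfRight : Module S (CharacterModule N) where
  one_smul c := by ext n; simp [left_smul_apply]
  mul_smul s t c := by ext n; simp [left_smul_apply, mul_smul]
  smul_zero s := rfl
  smul_add s c c' := rfl
  add_smul s t c := by
    ext n
    rw [left_smul_apply, op_add, add_smul]
    exact map_add c _ _
  zero_smul c := by
    ext n
    rw [left_smul_apply, op_zero, zero_smul]
    exact map_zero c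

end Module

variable {N N' N'' : Type u} [AddCommGroup N] [Module Sᵐᵒᵖ N] [AddCommGroup N'] [Module Sᵐᵒᵖ N']
  [AddCommGroup N''] [Module Sᵐᵒᵖ N'']

/-- The dual of a homomorphism of right `S`-modules. -/
def CharacterModule.mapOfRight (g : N →ₗ[Sᵐᵒᵖ] N') :
    CharacterModule N' →ₗ[S] CharacterModule N where
  toFun c := AddMonoidHom.comp c g.toAddMonoidHom
  map_add' _ _ := rfl
  map_smul' s c := by
    ext n
    exact congrArg c (g.map_smul (op s) n).symm

theorem CharacterModule.mapOfRight_apply (g : N →ₗ[Sᵐᵒᵖ] N') (c : CharacterModule N') (n : N) :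
    mapOfRight g c n = c (g n) := rfl

section ShortExact

variable {f : N →ₗ[Sᵐᵒᵖ] N'} {g : N' →ₗ[Sᵐᵒᵖ] N''}

theorem CharacterModule.mapOfRight_injective (hg : Function.Surjective g) :
    Function.Injective (mapOfRight g) := by
  intro c c' h
  ext n
  obtain ⟨n, rfl⟩ := hg n
  exact DFunLike.congr_fun h n

theorem CharacterModule.mapOfRight_surjective (hf : Function.Injective f) :
    Function.Surjective (mapOfRight f) := by
  intro c
  obtain ⟨ψ, hψ⟩ := exists_character_comp_eq (f := (0 : N →+ N)) (g := f.toAddMonoidHom)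
    (fun b hb => ⟨0, ((map_eq_zero_iff f hf).1 hb).symm⟩) c (fun _ => map_zero c)
  exact ⟨ψ, CharacterModule.ext _ hψ⟩

theorem CharacterModule.mapOfRight_exact (hfg : Function.Exact f g) :
    Function.Exact (mapOfRight g) (mapOfRight f) := by
  refine fun c => ⟨fun hc => ?_, ?_⟩
  · obtain ⟨ψ, hψ⟩ := exists_character_comp_eq (f := f.toAddMonoidHom) (g := g.toAddMonoidHom)
      (fun b hb => (hfg b).1 hb) c (fun a => DFunLike.congr_fun hc a)
    exact ⟨ψ, CharacterModule.ext _ hψ⟩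
  · rintro ⟨ψ, rfl⟩
    ext n
    simp only [mapOfRight_apply, hfg.apply_apply_eq_zero]
    exact map_zero ψ

end ShortExact

theorem CharacterModule.injective_of_projective [Module.Projective Sᵐᵒᵖ N] :
    Module.Injective S (CharacterModule N) where
  out X Y _ _ _ _ i hi θ := by
    obtain ⟨σ, hσ⟩ := (Module.projective_def' (R := Sᵐᵒᵖ) (P := N)).1 inferInstance
    have hext : ∀ a : N, ∃ φ : CharacterModule Y, ∀ x, φ (i x) = θ x a := fun a =>
      exists_character_comp_eq (f := (0 : X →+ X)) (g := i.toAddMonoidHom)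
        (fun b hb => ⟨0, ((map_eq_zero_iff i hi).1 hb).symm⟩)
        (AddMonoidHom.mk' (fun x => θ x a) fun x y => by rw [map_add]; rfl)
        (fun _ => map_zero _)
    choose φ hφ using hext
    let F (y : Y) (a : N) : Sᵐᵒᵖ →+ AddCircle (1 : ℚ) :=
      AddMonoidHom.mk' (fun r => φ a (unop r • y)) fun r r' => by
        rw [unop_add, add_smul, map_add]
    have hF (y : Y) (a : N) (r : Sᵐᵒᵖ) : F y a r = φ a (unop r • y) := rfl
    refine ⟨{
      toFun := fun y => (Finsupp.liftAddHom (F y)).comp σ.toAddMonoidHom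
      map_add' := fun y y' => ?_
      map_smul' := fun s y => ?_ }, fun x => ?_⟩
    · refine CharacterModule.ext _ fun q => ?_
      change Finsupp.liftAddHom (F (y + y')) (σ q) =
        Finsupp.liftAddHom (F y) (σ q) + Finsupp.liftAddHom (F y') (σ q)
      simp [Finsupp.liftAddHom_apply, Finsupp.sum, hF, Finset.sum_add_distrib]
    · refine CharacterModule.ext _ fun q => ?_
      change Finsupp.liftAddHom (F (s • y)) (σ q) = Finsupp.liftAddHom (F y) (σ (op s • q))
      rw [map_smul, Finsupp.liftAddHom_apply, Finsupp.liftAddHom_apply,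
        Finsupp.sum_smul_index' fun a => map_zero _]
      refine Finset.sum_congr rfl fun a _ => ?_
      simp [hF, mul_smul]
    · refine CharacterModule.ext _ fun q => ?_
      change Finsupp.liftAddHom (F (i x)) (σ q) = θ x q
      conv_rhs => rw [← LinearMap.id_apply (R := Sᵐᵒᵖ) q, ← hσ, LinearMap.comp_apply,
        Finsupp.linearCombination_apply, Finsupp.sum, map_sum]
      rw [Finsupp.liftAddHom_apply, Finsupp.sum]
      refine Finset.sum_congr rfl fun a _ => ?_
      rw [hF, ← map_smul, hφ, map_smul]
      rfl

end Characters

/-! ## Characters of `N ⊗_S T` -/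

section TensorCharacters

variable {S : Type u} [Ring S] {N : Type u} [AddCommGroup N] [Module Sᵐᵒᵖ N]
  {T : Type u} [AddCommGroup T] [Module S T]

theorem MTensor.addHom_ext {G : Type*} [AddCommGroup G] {φ ψ : MTensor S N T →+ G}
    (h : ∀ n t, φ (MTensor.mk n t) = ψ (MTensor.mk n t)) : φ = ψ := by
  refine QuotientAddGroup.addMonoidHom_ext _ (AddMonoidHom.ext fun x => ?_)
  induction x using TensorProduct.induction_on with
  | zero => simp
  | tmul t n => exact h n t
  | add x y hx hy => rw [map_add, map_add, hx, hy]

theorem MTensor.mk_smul_right (n : N) (s : S) (t : T) :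
    (MTensor.mk n (s • t) : MTensor S N T) = MTensor.mk (op s • n) t := by
  refine (QuotientAddGroup.eq_iff_sub_mem).2 (AddSubgroup.subset_closure ⟨s, t, n, rfl⟩)

theorem MTensor.mk_add_left (n n' : N) (t : T) :
    (MTensor.mk (n + n') t : MTensor S N T) = MTensor.mk n t + MTensor.mk n' t := by
  change QuotientAddGroup.mk _ = _
  rw [TensorProduct.tmul_add]
  rfl

/-- Characters of `N ⊗_S T` give `S`-linear maps from `T` to the character module of `N`. -/
def MTensor.curryCharacter (c : CharacterModule (MTensor S N T)) : T →ₗ[S] CharacterModule N where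
  toFun t := AddMonoidHom.mk' (fun n => c (MTensor.mk n t)) fun n n' => by
    rw [MTensor.mk_add_left]; exact map_add c _ _
  map_add' t t' := by
    refine CharacterModule.ext _ fun n => ?_
    change c (MTensor.mk n (t + t')) = c (MTensor.mk n t) + c (MTensor.mk n t')
    have h : (MTensor.mk n (t + t') : MTensor S N T) = MTensor.mk n t + MTensor.mk n t' := by
      change QuotientAddGroup.mk _ = _
      rw [TensorProduct.add_tmul]
      rfl
    rw [h]
    exact map_add c _ _
  map_smul' s t := by
    refine CharacterModule.ext _ fun n => ?_
    exact congrArg c (MTensor.mk_smul_right n s t)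

/-- An `S`-linear map from `T` to the character module of `N` gives a character of `N ⊗_S T`. -/
def MTensor.uncurryCharacter (θ : T →ₗ[S] CharacterModule N) : CharacterModule (MTensor S N T) :=
  QuotientAddGroup.lift _ (TensorProduct.liftAddHom
      (AddMonoidHom.mk' (fun t => (θ t : N →+ AddCircle (1 : ℚ))) fun t t' => map_add θ t t')
      (fun z t n => by
        change θ (z • t) n = θ t (z • n)
        rw [map_zsmul, map_zsmul]; rfl))
    (by
      refine (AddSubgroup.closure_le _).2 ?_
      rintro x ⟨s, t, n, rfl⟩
      simp only [SetLike.mem_coe, AddMonoidHom.mem_ker, map_sub, TensorProduct.liftAddHom_tmul]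
      change θ (s • t) n - θ t (op s • n) = 0
      rw [map_smul, CharacterModule.left_smul_apply, sub_self])

theorem MTensor.exact_map {N' N'' : Type u} [AddCommGroup N'] [Module Sᵐᵒᵖ N']
    [AddCommGroup N''] [Module Sᵐᵒᵖ N''] {f : N →ₗ[Sᵐᵒᵖ] N'} {g : N' →ₗ[Sᵐᵒᵖ] N''}
    (hgf : ∀ n, g (f n) = 0)
    (h : ∀ θ : T →ₗ[S] CharacterModule N', (∀ t n, θ t (f n) = 0) →
      ∃ θ' : T →ₗ[S] CharacterModule N'', (CharacterModule.mapOfRight g).comp θ' = θ) :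
    Function.Exact (MTensor.map (T := T) f) (MTensor.map (T := T) g) := by
  have h0 : (MTensor.map (T := T) g).comp (MTensor.map f) = 0 := MTensor.addHom_ext fun n t => by
    change MTensor.mk (g (f n)) t = 0
    rw [hgf]
    change QuotientAddGroup.mk (t ⊗ₜ[ℤ] (0 : N'')) = _
    rw [TensorProduct.tmul_zero]
    rfl
  refine fun b => ⟨fun hb => ?_, ?_⟩
  · by_contra hb'
    obtain ⟨χ, hχ, hχb⟩ := exists_character_apply_ne_zero_of_notMem
      (MTensor.map (T := T) f).range hb'
    obtain ⟨θ', hθ'⟩ := h (MTensor.curryCharacter χ) fun t n => hχ _ ⟨MTensor.mk n t, rfl⟩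
    have : χ = AddMonoidHom.comp (MTensor.uncurryCharacter θ') (MTensor.map g) :=
      MTensor.addHom_ext fun n t =>
        (DFunLike.congr_fun (LinearMap.congr_fun hθ' t) n).symm
    apply hχb
    rw [this]
    change MTensor.uncurryCharacter θ' (MTensor.map g b) = 0
    rw [hb]
    exact map_zero _
  · rintro ⟨a, rfl⟩
    exact DFunLike.congr_fun h0 a

end TensorCharacters

/-! ## `Tor` and characters -/

section TorVanishing

theorem LinearMap.exists_comp_eq_of_injective {A B C Y : Type*} [Ring A] [AddCommGroup B]
    [Module A B] [AddCommGroup C] [Module A C] [AddCommGroup Y] [Module A Y]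
    {f : B →ₗ[A] C} (hf : Function.Injective f) (φ : Y →ₗ[A] C) (h : ∀ y, ∃ b, f b = φ y) :
    ∃ ψ : Y →ₗ[A] B, f.comp ψ = φ :=
  ⟨(LinearEquiv.ofInjective f hf).symm.toLinearMap.comp (φ.codRestrict (LinearMap.range f) h),
    LinearMap.ext fun y => congrArg Subtype.val
      ((LinearEquiv.ofInjective f hf).apply_symm_apply ⟨φ y, h y⟩)⟩

variable {S : Type u} [Ring S] {N : Type u} [AddCommGroup N] [Module Sᵐᵒᵖ N]
  {T : Type u} [AddCommGroup T] [Module S T]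

open CharacterModule in
theorem torVanishAll_of_extVanishes (h : ∀ n, ExtVanishes S T (CharacterModule N) (n + 1)) :
    TorVanishAll S N T := by
  have hQ := isProjResolution_freeResolution Sᵐᵒᵖ N
  generalize freeResolution Sᵐᵒᵖ N = Q at hQ
  have hinj (j : ℕ) : Module.Injective S (CharacterModule (Q.P j)) :=
    have := hQ.proj j
    injective_of_projective
  have key (j n : ℕ) : ExtVanishes S T (CharacterModule (LinearMap.range (Q.d j))) (n + 1) := by
    induction j generalizing n with
    | zero =>
      exact .right_of_middle (mapOfRight_injective hQ.surj)
        (mapOfRight_exact (exact_subtype_range hQ.exact0))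
        (mapOfRight_surjective (Submodule.injective_subtype _)) (.of_injective _ _ n) (h (n + 1))
    | succ j ih =>
      exact .right_of_middle (mapOfRight_injective (Q.d j).surjective_rangeRestrict)
        (mapOfRight_exact (exact_subtype_range_rangeRestrict (hQ.exactSucc j)))
        (mapOfRight_surjective (Submodule.injective_subtype _)) (.of_injective _ _ n) (ih (n + 1))
  refine ⟨Q, hQ, fun j => MTensor.exact_map
    (fun n => (hQ.exactSucc j).apply_apply_eq_zero n) fun θ hθ => ?_⟩
  obtain ⟨θ₁, rfl⟩ := LinearMap.exists_comp_eq_of_injective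
    (mapOfRight_injective (Q.d j).surjective_rangeRestrict) θ fun t =>
      (mapOfRight_exact (exact_subtype_range_rangeRestrict (hQ.exactSucc j)) (θ t)).1 <|
        CharacterModule.ext _ fun ⟨_, n, hn⟩ => by subst hn; exact hθ t n
  obtain ⟨θ₂, rfl⟩ : ∃ θ₂ : T →ₗ[S] CharacterModule (Q.P j),
      (mapOfRight (LinearMap.range (Q.d j)).subtype).comp θ₂ = θ₁ := by
    cases j with
    | zero =>
      exact (h 0).exists_lift (mapOfRight_injective hQ.surj)
        (mapOfRight_exact (exact_subtype_range hQ.exact0))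
        (mapOfRight_surjective (Submodule.injective_subtype _)) θ₁
    | succ j =>
      exact (key j 0).exists_lift (mapOfRight_injective (Q.d j).surjective_rangeRestrict)
        (mapOfRight_exact (exact_subtype_range_rangeRestrict (hQ.exactSucc j)))
        (mapOfRight_surjective (Submodule.injective_subtype _)) θ₁
  exact ⟨θ₂, rfl⟩

end TorVanishing

/-! ## The dual of the evaluation map -/

section EvalCharacter

variable (S R : Type u) [Ring S] [Ring R]
variable (T : Type u) [AddCommGroup T] [Module S T] [Module Rᵐᵒᵖ T] [SMulCommClass S Rᵐᵒᵖ T]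
variable {M K P K' : Type u} [AddCommGroup M] [Module Rᵐᵒᵖ M] [AddCommGroup K] [Module Rᵐᵒᵖ K]
  [AddCommGroup P] [Module Rᵐᵒᵖ P] [AddCommGroup K'] [Module Rᵐᵒᵖ K']

/-- The character `χ` of `M` gives the `S`-linear map `t ↦ (h ↦ χ (h t))`. -/
def evalCharacter (χ : CharacterModule M) : T →ₗ[S] CharacterModule (T →ₗ[Rᵐᵒᵖ] M) where
  toFun t := AddMonoidHom.mk' (fun h => χ (h t)) fun h h' => map_add χ (h t) (h' t)
  map_add' t t' := CharacterModule.ext _ fun h => by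
    change χ (h (t + t')) = χ (h t) + χ (h t')
    rw [map_add, map_add]
  map_smul' _ _ := rfl

theorem nuFun_bijective (h : Function.Bijective (evalCharacter S R T (M := M))) :
    Function.Bijective (MTensor.nuFun S R T M) := by
  refine ⟨(injective_iff_map_eq_zero _).2 fun x hx => ?_, fun m => ?_⟩
  · by_contra hx0
    obtain ⟨χ, hχ⟩ := CharacterModule.exists_character_apply_ne_zero_of_ne_zero hx0
    obtain ⟨φ, hφ⟩ := h.2 (MTensor.curryCharacter χ)
    have : χ = AddMonoidHom.comp φ (MTensor.nuFun S R T M) := MTensor.addHom_ext fun n t =>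
      (DFunLike.congr_fun (LinearMap.congr_fun hφ t) n).symm
    apply hχ
    rw [this]
    change φ (MTensor.nuFun S R T M x) = 0
    rw [hx]
    exact map_zero φ
  · by_contra hm
    obtain ⟨χ, hχ, hχm⟩ := exists_character_apply_ne_zero_of_notMem
      (MTensor.nuFun S R T M).range hm
    have : χ = 0 := h.1 <| LinearMap.ext fun t => CharacterModule.ext _ fun g =>
      hχ _ ⟨MTensor.mk g t, rfl⟩
    exact hχm (by rw [this]; rfl)

/-- Composition with `g` as a homomorphism `Hom_R(T, M) → Hom_R(T, K)` of right `S`-modules. -/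
def homMap (g : M →ₗ[Rᵐᵒᵖ] K) : (T →ₗ[Rᵐᵒᵖ] M) →ₗ[Sᵐᵒᵖ] (T →ₗ[Rᵐᵒᵖ] K) where
  toFun h := g.comp h
  map_add' h h' := LinearMap.comp_add h h' g
  map_smul' _ _ := rfl

variable {f : K →ₗ[Rᵐᵒᵖ] P} {g : P →ₗ[Rᵐᵒᵖ] K'}

theorem homMap_injective (hf : Function.Injective f) : Function.Injective (homMap S R T f) :=
  fun _ _ h => LinearMap.ext fun t => hf (LinearMap.congr_fun h t)

theorem homMap_exact (hf : Function.Injective f) (hfg : Function.Exact f g) :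
    Function.Exact (homMap S R T f) (homMap S R T g) := by
  refine fun h => ⟨fun hh => ?_, ?_⟩
  · exact LinearMap.exists_comp_eq_of_injective hf h fun t =>
      (hfg (h t)).1 (LinearMap.congr_fun hh t)
  · rintro ⟨h, rfl⟩
    exact LinearMap.ext fun t => hfg.apply_apply_eq_zero (h t)

theorem evalCharacter_injective_of_surjective (hg : Function.Surjective g)
    (hP : Function.Injective (evalCharacter S R T (M := P))) :
    Function.Injective (evalCharacter S R T (M := K')) := by
  intro χ χ' h
  have : CharacterModule.mapOfRight g χ = CharacterModule.mapOfRight g χ' :=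
    hP <| LinearMap.ext fun t => CharacterModule.ext _ fun k =>
      DFunLike.congr_fun (LinearMap.congr_fun h t) (g.comp k)
  exact CharacterModule.mapOfRight_injective hg this

variable (hf : Function.Injective f) (hfg : Function.Exact f g) (hg : Function.Surjective g)

include hf hfg hg

theorem homMap_surjective (hK : ExtVanishes Rᵐᵒᵖ T K 1) :
    Function.Surjective (homMap S R T g) :=
  hK.exists_lift hf hfg hg

theorem evalCharacter_surjective_of_exact (hext : ExtVanishes Rᵐᵒᵖ T K 1)
    (hK : Function.Injective (evalCharacter S R T (M := K)))
    (hP : Function.Surjective (evalCharacter S R T (M := P))) :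
    Function.Surjective (evalCharacter S R T (M := K')) := by
  intro φ
  obtain ⟨χ, hχ⟩ := hP ((CharacterModule.mapOfRight (homMap S R T g)).comp φ)
  have hχ' (t : T) (h : T →ₗ[Rᵐᵒᵖ] P) : χ (h t) = φ t (g.comp h) :=
    DFunLike.congr_fun (LinearMap.congr_fun hχ t) h
  have h0 : CharacterModule.mapOfRight f χ = 0 := hK <| LinearMap.ext fun t =>
    CharacterModule.ext _ fun h => by
      change χ (f.comp h t) = 0
      rw [hχ', ← LinearMap.comp_assoc, hfg.linearMap_comp_eq_zero, LinearMap.zero_comp]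
      exact map_zero (φ t)
  obtain ⟨ψ, rfl⟩ := (CharacterModule.mapOfRight_exact hfg χ).1 h0
  refine ⟨ψ, LinearMap.ext fun t => CharacterModule.ext _ fun h => ?_⟩
  obtain ⟨h, rfl⟩ := homMap_surjective S R T hf hfg hg hext h
  exact hχ' t h

theorem extVanishes_characterModule_of_exact (hext : ExtVanishes Rᵐᵒᵖ T K 1)
    (hK : Function.Surjective (evalCharacter S R T (M := K)))
    (hP : ∀ n, ExtVanishes S T (CharacterModule (T →ₗ[Rᵐᵒᵖ] P)) (n + 1)) :
    ExtVanishes S T (CharacterModule (T →ₗ[Rᵐᵒᵖ] K')) 1 := by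
  refine .one_of_exists_lift
    (CharacterModule.mapOfRight_injective (homMap_surjective S R T hf hfg hg hext))
    (CharacterModule.mapOfRight_exact (homMap_exact S R T hf hfg))
    (CharacterModule.mapOfRight_surjective (homMap_injective S R T hf)) (hP 0) fun φ => ?_
  obtain ⟨χ, rfl⟩ := hK φ
  obtain ⟨χ, rfl⟩ := CharacterModule.mapOfRight_surjective hf χ
  exact ⟨evalCharacter S R T χ, rfl⟩

theorem extVanishes_characterModule_succ_of_exact (hext : ExtVanishes Rᵐᵒᵖ T K 1) {n : ℕ}
    (hK : ExtVanishes S T (CharacterModule (T →ₗ[Rᵐᵒᵖ] K)) n)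
    (hP : ∀ n, ExtVanishes S T (CharacterModule (T →ₗ[Rᵐᵒᵖ] P)) (n + 1)) :
    ExtVanishes S T (CharacterModule (T →ₗ[Rᵐᵒᵖ] K')) (n + 1) :=
  .left_of_middle
    (CharacterModule.mapOfRight_injective (homMap_surjective S R T hf hfg hg hext))
    (CharacterModule.mapOfRight_exact (homMap_exact S R T hf hfg))
    (CharacterModule.mapOfRight_surjective (homMap_injective S R T hf)) hK (hP n)

end EvalCharacter

/-! ## Injective modules -/

section InjectiveModules

theorem Module.Injective.exists_comp_eq {A X Y E : Type u} [Ring A] [AddCommGroup X] [Module A X]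
    [AddCommGroup Y] [Module A Y] [AddCommGroup E] [Module A E] [hE : Module.Injective A E]
    {f : X →ₗ[A] Y} (hf : Function.Injective f) (φ : X →ₗ[A] E) :
    ∃ ψ : Y →ₗ[A] E, ψ.comp f = φ := by
  obtain ⟨ψ, hψ⟩ := hE.out f hf φ
  exact ⟨ψ, LinearMap.ext hψ⟩

theorem Module.Injective.exact_comp {A X₀ X₁ X₂ E : Type u} [Ring A] [AddCommGroup X₀]
    [Module A X₀] [AddCommGroup X₁] [Module A X₁] [AddCommGroup X₂] [Module A X₂]
    [AddCommGroup E] [Module A E] [Module.Injective A E]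
    {u : X₂ →ₗ[A] X₁} {v : X₁ →ₗ[A] X₀} (h : Function.Exact u v) :
    Function.Exact (fun f : X₀ →ₗ[A] E => f.comp v) (fun f : X₁ →ₗ[A] E => f.comp u) :=
  exact_comp_of_exists_extend h fun φ =>
    Module.Injective.exists_comp_eq (Submodule.injective_subtype _) φ

variable {S : Type u} (R : Type u) [Ring S] [Ring R]
variable (T : Type u) [AddCommGroup T] [Module S T] [Module Rᵐᵒᵖ T] [SMulCommClass S Rᵐᵒᵖ T]
variable {F F' : Type u} [AddCommGroup F] [Module S F] [AddCommGroup F'] [Module S F']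

/-- Precomposition with `d` as a homomorphism `Hom_S(F, T) → Hom_S(F', T)` of right
`R`-modules. -/
def precompHom (d : F' →ₗ[S] F) : (F →ₗ[S] T) →ₗ[Rᵐᵒᵖ] (F' →ₗ[S] T) where
  toFun g := g.comp d
  map_add' g g' := LinearMap.add_comp d g' g
  map_smul' _ _ := rfl

variable (E : Type u) [AddCommGroup E] [Module Rᵐᵒᵖ E]

/-- The homomorphism `Hom_R(Hom_S(F', T), E) → Hom_R(Hom_S(F, T), E)` induced by `d`. -/
def precompHomDual (d : F' →ₗ[S] F) :
    ((F' →ₗ[S] T) →ₗ[Rᵐᵒᵖ] E) →+ ((F →ₗ[S] T) →ₗ[Rᵐᵒᵖ] E) :=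
  AddMonoidHom.mk' (fun Φ => Φ.comp (precompHom R T d))
    fun Φ Φ' => LinearMap.add_comp (precompHom R T d) Φ' Φ

variable {E}

/-- The comparison map from the character module of `Hom_R(Hom_S(F, T), E)` to the homomorphisms
from `F` to the character module of `Hom_R(T, E)`. -/
def doubleHomCharacter (ψ : CharacterModule ((F →ₗ[S] T) →ₗ[Rᵐᵒᵖ] E)) :
    F →ₗ[S] CharacterModule (T →ₗ[Rᵐᵒᵖ] E) where
  toFun y := AddMonoidHom.mk' (fun h => ψ (h.comp (LinearMap.applyₗ' Rᵐᵒᵖ y)))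
    fun h h' => by rw [LinearMap.add_comp, map_add]
  map_add' y y' := CharacterModule.ext _ fun h => by
    change ψ _ = ψ _ + ψ _
    rw [map_add, LinearMap.comp_add, map_add]
  map_smul' s y := CharacterModule.ext _ fun h => congrArg ψ <| LinearMap.ext fun g =>
    congrArg h (g.map_smul s y)

theorem doubleHomCharacter_comp (d : F' →ₗ[S] F)
    (ψ : CharacterModule ((F →ₗ[S] T) →ₗ[Rᵐᵒᵖ] E)) :
    (doubleHomCharacter R T ψ).comp d =
      doubleHomCharacter R T (AddMonoidHom.comp ψ (precompHomDual R T E d)) := rfl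

section FiniteProjective

variable (S F) in
theorem exists_finite_dualBasis [Module.Finite S F] [Module.Projective S F] :
    ∃ (n : ℕ) (x : Fin n → F) (f : Fin n → F →ₗ[S] S), ∀ y, ∑ i, f i y • x i = y := by
  obtain ⟨n, p, q, -, -, hpq⟩ := Module.Finite.exists_comp_eq_id_of_projective S F
  refine ⟨n, fun i => p (Pi.single i 1), fun i => (LinearMap.proj i).comp q, fun y => ?_⟩
  conv_rhs => rw [← LinearMap.id_apply (R := S) y, ← hpq, LinearMap.comp_apply,
    ← Finset.univ_sum_single (q y), map_sum]
  refine Finset.sum_congr rfl fun i _ => ?_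
  simp [← map_smul, ← Pi.single_smul]

/-- The homomorphism `T → Hom_S(F, T)` of right `R`-modules induced by `f : F → S`. -/
def smulRightHom (f : F →ₗ[S] S) : T →ₗ[Rᵐᵒᵖ] (F →ₗ[S] T) where
  toFun t := f.smulRight t
  map_add' t t' := LinearMap.ext fun y => smul_add (f y) t t'
  map_smul' ρ t := LinearMap.ext fun y => smul_comm (f y) ρ t

variable [Module.Finite S F] [Module.Projective S F]

theorem doubleHomCharacter_injective :
    Function.Injective (doubleHomCharacter (S := S) R T (F := F) (E := E)) := by
  obtain ⟨n, x, f, hx⟩ := exists_finite_dualBasis S F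
  intro ψ ψ' h
  refine CharacterModule.ext _ fun Φ => ?_
  have hΦ : Φ = ∑ i, (Φ.comp (smulRightHom R T (f i))).comp (LinearMap.applyₗ' Rᵐᵒᵖ (x i)) := by
    ext g
    have hg : g = ∑ i, smulRightHom R T (f i) (g (x i)) := by
      ext y
      conv_lhs => rw [← hx y, map_sum]
      simp [smulRightHom]
    conv_lhs => rw [hg, map_sum]
    simp
  rw [hΦ, map_sum, map_sum]
  exact Finset.sum_congr rfl fun i _ => DFunLike.congr_fun (LinearMap.congr_fun h (x i)) _

theorem doubleHomCharacter_surjective :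
    Function.Surjective (doubleHomCharacter (S := S) R T (F := F) (E := E)) := by
  obtain ⟨n, x, f, hx⟩ := exists_finite_dualBasis S F
  intro θ
  refine ⟨AddMonoidHom.mk' (fun Φ => ∑ i, θ (x i) (Φ.comp (smulRightHom R T (f i))))
    fun Φ Φ' => ?_, LinearMap.ext fun y => CharacterModule.ext _ fun h => ?_⟩
  · simp_rw [LinearMap.add_comp, map_add, Finset.sum_add_distrib]
  · conv_rhs => rw [← hx y, map_sum]
    refine .trans ?_ (AddMonoidHom.finsetSum_apply (fun i => θ (f i y • x i)) Finset.univ h).symm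
    change ∑ i, θ (x i) ((h.comp (LinearMap.applyₗ' Rᵐᵒᵖ y)).comp (smulRightHom R T (f i))) = _
    refine Finset.sum_congr rfl fun i _ => ?_
    exact (DFunLike.congr_fun (map_smul θ (f i y) (x i)) h).symm

end FiniteProjective

theorem exists_doubleHomCharacter_comp_eq {X : Type u} [AddCommGroup X] [Module S X]
    [Module.Finite S F] [Module.Projective S F] [Module.Finite S F'] [Module.Projective S F']
    [Module.Injective Rᵐᵒᵖ E] {d₁ : F' →ₗ[S] F} {d₀ : F →ₗ[S] X}
    (h : Function.Exact (fun g : X →ₗ[S] T => g.comp d₀) (fun g : F →ₗ[S] T => g.comp d₁))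
    {θ : F →ₗ[S] CharacterModule (T →ₗ[Rᵐᵒᵖ] E)} (hθ : θ.comp d₁ = 0) :
    ∃ ψ : CharacterModule ((X →ₗ[S] T) →ₗ[Rᵐᵒᵖ] E),
      (doubleHomCharacter R T ψ).comp d₀ = θ := by
  obtain ⟨ψ, rfl⟩ := doubleHomCharacter_surjective R T θ
  have h0 : AddMonoidHom.comp ψ (precompHomDual R T E d₁) = 0 :=
    doubleHomCharacter_injective R T (by rw [← doubleHomCharacter_comp, hθ]; rfl)
  have h' : Function.Exact (precompHom R T d₀) (precompHom R T d₁) := h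
  obtain ⟨ψ', hψ'⟩ := exists_character_comp_eq (f := precompHomDual R T E d₁)
    (g := precompHomDual R T E d₀) (fun Φ hΦ => (Module.Injective.exact_comp h' Φ).1 hΦ) ψ
    (fun Φ => DFunLike.congr_fun h0 Φ)
  refine ⟨ψ', ?_⟩
  rw [doubleHomCharacter_comp]
  exact congrArg _ (CharacterModule.ext _ hψ')

variable {R T}

theorem extVanishes_characterModule_of_injective (hres : HasFGProjResolution S T)
    (hext : ExtVanishAll S T T) [Module.Injective Rᵐᵒᵖ E] (n : ℕ) :
    ExtVanishes S T (CharacterModule (T →ₗ[Rᵐᵒᵖ] E)) (n + 1) := by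
  obtain ⟨Q, hQ, hfin⟩ := hres
  refine hQ.extVanishes (fun j => fun θ => ⟨fun hθ => ?_, ?_⟩) n
  · have := hQ.proj
    obtain ⟨ψ, rfl⟩ := exists_doubleHomCharacter_comp_eq R T
      (hQ.exact_comp hext.extVanishes j) hθ
    exact ⟨_, rfl⟩
  · rintro ⟨θ, rfl⟩
    change (θ.comp (Q.d j)).comp (Q.d (j + 1)) = 0
    rw [LinearMap.comp_assoc, (hQ.exactSucc j).linearMap_comp_eq_zero, LinearMap.comp_zero]

theorem doubleHomCharacter_bijective (hres : HasFGProjResolution S T) [Module.Injective Rᵐᵒᵖ E] :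
    Function.Bijective (doubleHomCharacter (S := S) R T (F := T) (E := E)) := by
  obtain ⟨Q, hQ, hfin⟩ := hres
  have := hQ.proj
  refine ⟨fun ψ ψ' h => ?_, fun θ => ?_⟩
  · have h' : AddMonoidHom.comp ψ (precompHomDual R T E Q.ε) =
        AddMonoidHom.comp ψ' (precompHomDual R T E Q.ε) :=
      doubleHomCharacter_injective R T (by
        rw [← doubleHomCharacter_comp, ← doubleHomCharacter_comp, h])
    have hε : Function.Injective (precompHom R T Q.ε) := fun g g' hg =>
      (LinearMap.cancel_right hQ.surj).1 hg
    refine CharacterModule.ext _ fun Φ => ?_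
    obtain ⟨Φ, rfl⟩ := Module.Injective.exists_comp_eq hε Φ
    exact DFunLike.congr_fun h' Φ
  · have hexact : Function.Exact (fun g : T →ₗ[S] T => g.comp Q.ε)
        (fun g : Q.P 0 →ₗ[S] T => g.comp (Q.d 0)) := fun g => by
      refine ⟨fun hg => ?_, ?_⟩
      · refine LinearMap.exists_comp_eq_of_surjective hQ.surj g fun b hb => ?_
        obtain ⟨a, rfl⟩ := (hQ.exact0 b).1 hb
        exact LinearMap.congr_fun hg a
      · rintro ⟨g, rfl⟩
        change (g.comp Q.ε).comp (Q.d 0) = 0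
        rw [LinearMap.comp_assoc, hQ.exact0.linearMap_comp_eq_zero, LinearMap.comp_zero]
    obtain ⟨ψ, hψ⟩ := exists_doubleHomCharacter_comp_eq R T hexact (θ := θ.comp Q.ε) (by
      rw [LinearMap.comp_assoc, hQ.exact0.linearMap_comp_eq_zero, LinearMap.comp_zero])
    exact ⟨ψ, (LinearMap.cancel_right hQ.surj).1 hψ⟩

theorem apply_id_bijective (hR : Function.Bijective (rightHomothety S R T)) :
    Function.Bijective (fun Φ : (T →ₗ[S] T) →ₗ[Rᵐᵒᵖ] E => Φ LinearMap.id) := by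
  let w : Rᵐᵒᵖ ≃ₗ[Rᵐᵒᵖ] (T →ₗ[S] T) := LinearEquiv.ofBijective
    (LinearMap.toSpanSingleton Rᵐᵒᵖ (T →ₗ[S] T) LinearMap.id)
    (hR.comp MulOpposite.unop_bijective)
  have hw (ρ : Rᵐᵒᵖ) : w ρ = ρ • LinearMap.id := rfl
  refine ⟨fun Φ Φ' h => LinearMap.ext fun g => ?_, fun e =>
    ⟨(LinearMap.toSpanSingleton Rᵐᵒᵖ E e).comp w.symm.toLinearMap, ?_⟩⟩
  · obtain ⟨ρ, rfl⟩ := w.surjective g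
    rw [hw, map_smul, map_smul]
    exact congrArg _ h
  · have : w.symm LinearMap.id = 1 := by rw [LinearEquiv.symm_apply_eq, hw, one_smul]
    simp [this]

theorem evalCharacter_bijective_of_injective (hres : HasFGProjResolution S T)
    (hR : Function.Bijective (rightHomothety S R T)) [Module.Injective Rᵐᵒᵖ E] :
    Function.Bijective (evalCharacter S R T (M := E)) := by
  let w : ((T →ₗ[S] T) →ₗ[Rᵐᵒᵖ] E) ≃+ E := AddEquiv.ofBijective
    (AddMonoidHom.mk' (fun Φ : (T →ₗ[S] T) →ₗ[Rᵐᵒᵖ] E => Φ LinearMap.id) fun _ _ => rfl)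
    (apply_id_bijective hR)
  have hw (χ : CharacterModule E) :
      evalCharacter S R T χ = doubleHomCharacter R T (AddMonoidHom.comp χ w.toAddMonoidHom) := rfl
  have hbij := doubleHomCharacter_bijective (S := S) (R := R) (T := T) (E := E) hres
  refine ⟨fun χ χ' h => CharacterModule.ext _ fun e => ?_, fun θ => ?_⟩
  · obtain ⟨Φ, rfl⟩ := w.surjective e
    exact DFunLike.congr_fun (hbij.1 h : AddMonoidHom.comp χ w.toAddMonoidHom =
      AddMonoidHom.comp χ' w.toAddMonoidHom) Φ
  · obtain ⟨ψ, rfl⟩ := hbij.2 θ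
    exact ⟨AddMonoidHom.comp ψ w.symm.toAddMonoidHom, (hw _).trans <| congrArg _ <|
      CharacterModule.ext _ fun Φ => congrArg ψ (w.symm_apply_apply Φ)⟩

end InjectiveModules

/-! ## Cocycles of complexes of injective modules -/

section BassClass

theorem ZComplex.exists_exact_subtype_ker {A : Type u} [Ring A] {C : ZComplex A} (hC : C.IsExact)
    {M : Type u} [AddCommGroup M] [Module A M] {j : ℤ} (e : M ≃ₗ[A] LinearMap.ker (C.d j)) :
    ∃ (i : ℤ) (g : C.P i →ₗ[A] M), Function.Surjective g ∧
      Function.Exact (LinearMap.ker (C.d i)).subtype g := by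
  obtain ⟨i, rfl⟩ : ∃ i, j = i + 1 := ⟨j - 1, by ring⟩
  refine ⟨i, e.symm.toLinearMap.comp (toCocycles hC i),
    e.symm.surjective.comp (toCocycles_surjective hC i), fun x => ?_⟩
  rw [← exact_subtype_toCocycles hC i x]
  exact map_eq_zero_iff e.symm e.symm.injective

variable {S R : Type u} [Ring S] [Ring R]
variable {T : Type u} [AddCommGroup T] [Module S T] [Module Rᵐᵒᵖ T] [SMulCommClass S Rᵐᵒᵖ T]

theorem inBassClass_of_cocycles (hres : HasFGProjResolution S T)
    (hR : Function.Bijective (rightHomothety S R T)) (hextS : ExtVanishAll S T T)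
    {C : ZComplex Rᵐᵒᵖ} (hC : C.IsExact) (hinj : ∀ i, Module.Injective Rᵐᵒᵖ (C.P i))
    (hext : ∀ j i, ExtVanishes Rᵐᵒᵖ T (LinearMap.ker (C.d j)) (i + 1))
    {M : Type u} [AddCommGroup M] [Module Rᵐᵒᵖ M] {j : ℤ}
    (e : M ≃ₗ[Rᵐᵒᵖ] LinearMap.ker (C.d j)) : InBassClass S R T M := by
  have hbijP (i : ℤ) : Function.Bijective (evalCharacter S R T (M := C.P i)) :=
    evalCharacter_bijective_of_injective hres hR
  have hextP (i : ℤ) (n : ℕ) :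
      ExtVanishes S T (CharacterModule (T →ₗ[Rᵐᵒᵖ] C.P i)) (n + 1) :=
    extVanishes_characterModule_of_injective hres hextS n
  have hi {M : Type u} [AddCommGroup M] [Module Rᵐᵒᵖ M] {j : ℤ}
      (e : M ≃ₗ[Rᵐᵒᵖ] LinearMap.ker (C.d j)) :
      Function.Injective (evalCharacter S R T (M := M)) := by
    obtain ⟨i, g, hg, -⟩ := ZComplex.exists_exact_subtype_ker hC e
    exact evalCharacter_injective_of_surjective S R T hg (hbijP i).1
  have hs {M : Type u} [AddCommGroup M] [Module Rᵐᵒᵖ M] {j : ℤ}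
      (e : M ≃ₗ[Rᵐᵒᵖ] LinearMap.ker (C.d j)) :
      Function.Surjective (evalCharacter S R T (M := M)) := by
    obtain ⟨i, g, hg, hfg⟩ := ZComplex.exists_exact_subtype_ker hC e
    exact evalCharacter_surjective_of_exact S R T (Submodule.injective_subtype _) hfg hg
      (hext i 0) (hi (.refl _ _)) (hbijP i).2
  have hch (n : ℕ) {M : Type u} [AddCommGroup M] [Module Rᵐᵒᵖ M] {j : ℤ}
      (e : M ≃ₗ[Rᵐᵒᵖ] LinearMap.ker (C.d j)) :
      ExtVanishes S T (CharacterModule (T →ₗ[Rᵐᵒᵖ] M)) (n + 1) := by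
    induction n generalizing M j with
    | zero =>
      obtain ⟨i, g, hg, hfg⟩ := ZComplex.exists_exact_subtype_ker hC e
      exact extVanishes_characterModule_of_exact S R T (Submodule.injective_subtype _) hfg hg
        (hext i 0) (hs (.refl _ _)) (hextP i)
    | succ n ih =>
      obtain ⟨i, g, hg, hfg⟩ := ZComplex.exists_exact_subtype_ker hC e
      exact extVanishes_characterModule_succ_of_exact S R T (Submodule.injective_subtype _) hfg hg
        (hext i 0) (ih (.refl _ _)) (hextP i)
  exact {
    extVanish := extVanishAll_of_extVanishes fun n => (hext j n).congr_right e.symm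
    torVanish := torVanishAll_of_extVanishes fun n => hch n e
    nuBij := nuFun_bijective S R T ⟨hi e, hs e⟩ }

end BassClass

/-- Let `T` be a Wakamatsu tilting `(S,R)`-bimodule and `M` a Gorenstein
injective right `R`-module. If either `pd(T_R) < ∞` or `id(T_R) < ∞`, then `M ∈ ℬ_T(R)`.
(No tensorly-faithfulness assumption is needed.) -/
theorem gorensteinInjective_mem_bass
    (S R : Type u) [Ring S] [Ring R]
    (T : Type u) [AddCommGroup T] [Module S T] [Module Rᵐᵒᵖ T] [SMulCommClass S Rᵐᵒᵖ T]
    (hW : IsWakamatsuTilting S R T)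
    (M : Type u) [AddCommGroup M] [Module Rᵐᵒᵖ M] (hM : IsGorensteinInjective Rᵐᵒᵖ M)
    (hT : (∃ n, ProjDimLE Rᵐᵒᵖ T n) ∨ (∃ n, InjDimLE Rᵐᵒᵖ T n)) :
    InBassClass S R T M := by
  obtain ⟨C, hinj, hC, hI, ⟨e⟩⟩ := hM
  refine inBassClass_of_cocycles hW.fgProjResS hW.bijR hW.extS hC hinj (fun j i => ?_) e
  obtain ⟨n, hn⟩ | ⟨n, hn⟩ := hT
  · exact ZComplex.extVanishes_cocycles hC hinj
      (fun j i => extVanishes_of_hasClassResolution_projective hn _ i) j i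
  · exact extVanishes_of_hasClassCoresolution_injective hn _
      (fun I _ _ hII i => ZComplex.extVanishes_injective_cocycles hC hinj hI I hII i j) i
end
end
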